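/- For each Dyck path λ of order n, the maps σ ↦ DTS(λ,σ) and σ ↦ DTR(λ,σ) are bijections from the set L(P_λ) of linear extensions of the chord poset of λ onto the set D(λ,*) of cover-inclusive Dyck tilings whose lower path is λ. -/

import Mathlib

open Finset

noncomputable section

/-- A Dyck path of order `n`: a word of `2n` steps (`true` = up-step `(+1,+1)`,
`false` = down-step `(+1,-1)`) from `(-n,0)` to `(n,0)` staying weakly above the x-axis. -/
structure DyckPath (n : ℕ) where
  step : Fin (2 * n) → Bool
  balanced : (Finset.univ.filter fun i => step i = true).card = n
  nonneg : ∀ k : ℕ, k ≤ 2 * n →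
    (Finset.univ.filter fun i : Fin (2 * n) => (i : ℕ) < k ∧ step i = false).card ≤
      (Finset.univ.filter fun i : Fin (2 * n) => (i : ℕ) < k ∧ step i = true).card

namespace DyckPath

/-- Height of the path above column `x` (columns run from `-n` to `n`). -/
def ht {n : ℕ} (P : DyckPath n) (x : ℤ) : ℤ :=
  ((Finset.univ.filter fun i : Fin (2 * n) => ((i : ℕ) : ℤ) < x + n ∧ P.step i = true).card : ℤ) -
    ((Finset.univ.filter fun i : Fin (2 * n) => ((i : ℕ) : ℤ) < x + n ∧ P.step i = false).card : ℤ)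

/-- Height of the path at lattice point number `k`, `0 ≤ k ≤ 2n`
(point `k` lies at column `k - n`). -/
def pt {n : ℕ} (P : DyckPath n) (k : ℕ) : ℤ := P.ht ((k : ℤ) - n)

end DyckPath

/-- `IsChord P p q`: the up-step at (0-indexed) position `p` matches the down-step at
position `q`, forming a chord of `P`. -/
def IsChord {n : ℕ} (P : DyckPath n) (p q : ℕ) : Prop :=
  p < q ∧ q < 2 * n ∧
    (∃ hp : p < 2 * n, P.step ⟨p, hp⟩ = true) ∧
    (∃ hq : q < 2 * n, P.step ⟨q, hq⟩ = false) ∧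
    P.pt (q + 1) = P.pt p ∧
    ∀ m : ℕ, p < m → m ≤ q → P.pt p < P.pt m

/-- A natural labeling of the chord poset of `P`: the chord labeled `i` has its up-step at
(0-indexed) position `l i` and matching down-step at position `r i`; distinct labels name
distinct chords; and if one chord is nested inside another it receives a larger label. -/
structure ChordLabeling {n : ℕ} (P : DyckPath n) where
  l : Fin n → ℕ
  r : Fin n → ℕ
  chord : ∀ i, IsChord P (l i) (r i)
  inj : Function.Injective l
  natural : ∀ i j : Fin n, l j < l i → r i < r j → j < i

/-- The length of the chord labeled `i`: the number of up steps of `P` between and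
including its two endpoints. -/
def chordLen {n : ℕ} {P : DyckPath n} (C : ChordLabeling P) (i : Fin n) : ℕ :=
  (Finset.univ.filter fun m : Fin (2 * n) =>
    C.l i ≤ (m : ℕ) ∧ (m : ℕ) ≤ C.r i ∧ P.step m = true).card

/-- The growth sequence `p_1, …, p_n` associated with a natural chord labeling:
`p i = #{j<i : l j < l i} + #{j<i : r j < l i}`. -/
def seqOf {n : ℕ} {P : DyckPath n} (C : ChordLabeling P) (i : Fin n) : ℕ :=
  (Finset.univ.filter fun j : Fin n => j < i ∧ C.l j < C.l i).card +
    (Finset.univ.filter fun j : Fin n => j < i ∧ C.r j < C.l i).card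

/-- `σ` is the standardization of the word `w` (with distinct letters). -/
def IsStandardization {n : ℕ} (w : Fin n → ℕ) (σ : Equiv.Perm (Fin n)) : Prop :=
  ∀ i j : Fin n, σ i < σ j ↔ w i < w j

/-- `σ ∈ 𝓛(P_λ)`: σ is `L₀ ∘ L⁻¹` for some natural labeling `L` of the chord poset,
equivalently the standardization of the word of left endpoints of a natural labeling. -/
def LinExt {n : ℕ} (P : DyckPath n) (σ : Equiv.Perm (Fin n)) : Prop :=
  ∃ C : ChordLabeling P, IsStandardization C.l σ

/-- Successor index in `Fin n` (used only under the guard `i+1 < n`). -/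
def nextIdx {n : ℕ} (i : Fin n) : Fin n := ⟨((i : ℕ) + 1) % n, Nat.mod_lt _ i.pos⟩

/-- Descent set of a word: positions `i` with `i+1 < n` and `w i > w (i+1)`. -/
def descentFinset {n : ℕ} (w : Fin n → ℕ) : Finset (Fin n) :=
  Finset.univ.filter fun i => (i : ℕ) + 1 < n ∧ w (nextIdx i) < w i

/-- Number of inversions of a word. -/
def wordInv {n : ℕ} (w : Fin n → ℕ) : ℕ :=
  (Finset.univ.filter fun p : Fin n × Fin n => p.1 < p.2 ∧ w p.2 < w p.1).card

/-- The word of values of a permutation. -/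
def permWord {n : ℕ} (σ : Equiv.Perm (Fin n)) : Fin n → ℕ := fun i => (σ i : ℕ)

/-- inv(σ). -/
def permInv {n : ℕ} (σ : Equiv.Perm (Fin n)) : ℕ := wordInv (permWord σ)

/-- des(σ). -/
def permDes {n : ℕ} (σ : Equiv.Perm (Fin n)) : ℕ := (descentFinset (permWord σ)).card

/-- `REM_i(w) = {k > i : w i > w k > w (i+1)}`, the right embraced numbers. -/
def remSet {n : ℕ} (w : Fin n → ℕ) (i : Fin n) : Finset (Fin n) :=
  Finset.univ.filter fun k => i < k ∧ w (nextIdx i) < w k ∧ w k < w i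

/-- desdif(σ) = Σ_{i ∈ DES σ} (σ i − σ (i+1)). -/
def desdif {n : ℕ} (σ : Equiv.Perm (Fin n)) : ℕ :=
  ∑ i ∈ descentFinset (permWord σ), (permWord σ i - permWord σ (nextIdx i))

/-- res(σ) = Σ_{i ∈ DES σ} #{k < i : σ i > σ k > σ (i+1)}. -/
def resStat {n : ℕ} (σ : Equiv.Perm (Fin n)) : ℕ :=
  ∑ i ∈ descentFinset (permWord σ),
    (Finset.univ.filter fun k : Fin n =>
      k < i ∧ permWord σ (nextIdx i) < permWord σ k ∧ permWord σ k < permWord σ i).card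

/-- The Mahonian statistic mad(σ) = desdif(σ) + res(σ). -/
def mad {n : ℕ} (σ : Equiv.Perm (Fin n)) : ℕ := desdif σ + resStat σ

/-- σ avoids the pattern 231. -/
def Avoids231 {n : ℕ} (σ : Equiv.Perm (Fin n)) : Prop :=
  ¬∃ i j k : Fin n, i < j ∧ j < k ∧ σ k < σ i ∧ σ i < σ j

/-- The boxes of the skew shape `lam/mu` (with `mu` weakly above `lam`), each box
recorded by its bottom corner (a lattice point `(x, z)` with `z ≡ x + n (mod 2)`). -/
def skewCells {n : ℕ} (lam mu : DyckPath n) : Finset (ℤ × ℤ) :=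
  ((Finset.Icc (-(n : ℤ)) n) ×ˢ (Finset.Icc (0 : ℤ) n)).filter fun c =>
    lam.ht c.1 ≤ c.2 ∧ c.2 + 2 ≤ mu.ht c.1 ∧ (c.2 - c.1 - n) % 2 = 0

/-- A Dyck tile, recorded by the set of bottom corners of its boxes: these form
a Dyck-path shape, i.e. a ±1-step lattice path whose two ends are lowest. -/
def IsDyckTile (t : Finset (ℤ × ℤ)) : Prop :=
  ∃ (a b : ℤ) (f : ℤ → ℤ), a ≤ b ∧
    (∀ x : ℤ, a ≤ x → x < b → f (x + 1) = f x + 1 ∨ f (x + 1) = f x - 1) ∧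
    f b = f a ∧ (∀ x : ℤ, a ≤ x → x ≤ b → f a ≤ f x) ∧
    t = (Finset.Icc a b).image fun x => (x, f x)

/-- A Dyck tiling of order `n`: a tiling of the skew shape between two Dyck paths of
order `n` by Dyck tiles. -/
structure DyckTiling (n : ℕ) where
  lower : DyckPath n
  upper : DyckPath n
  below : ∀ x : ℤ, lower.ht x ≤ upper.ht x
  tiles : Finset (Finset (ℤ × ℤ))
  isDyck : ∀ t ∈ tiles, IsDyckTile t
  disj : ∀ t ∈ tiles, ∀ u ∈ tiles, t ≠ u → Disjoint t u
  cover : tiles.biUnion id = skewCells lower upper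

namespace DyckTiling

/-- Number of boxes of the skew shape. -/
def area {n : ℕ} (T : DyckTiling n) : ℕ := (skewCells T.lower T.upper).card

/-- Number of tiles. -/
def numTiles {n : ℕ} (T : DyckTiling n) : ℕ := T.tiles.card

/-- art(T) = (area(T) + tiles(T)) / 2. -/
def art {n : ℕ} (T : DyckTiling n) : ℕ := (T.area + T.numTiles) / 2

/-- dis(T): the number of step positions where the lower path steps down while the
upper path steps up. -/
def dis {n : ℕ} (T : DyckTiling n) : ℕ :=
  (Finset.univ.filter fun i : Fin (2 * n) =>
    T.lower.step i = false ∧ T.upper.step i = true).card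

/-- Cover-inclusiveness: whenever a tile has a box strictly above a box of another tile,
its horizontal extent is contained in that of the other tile. -/
def CoverInclusive {n : ℕ} (T : DyckTiling n) : Prop :=
  ∀ t ∈ T.tiles, ∀ u ∈ T.tiles,
    (∃ p ∈ t, ∃ q ∈ u, (p : ℤ × ℤ).1 = (q : ℤ × ℤ).1 ∧ (q : ℤ × ℤ).2 < (p : ℤ × ℤ).2) →
    ∀ p ∈ t, ∃ y : ℤ, ((p : ℤ × ℤ).1, y) ∈ u

end DyckTiling

/-- Height function of the spread at column `s` of a Dyck path. -/
def spreadHt {n : ℕ} (P : DyckPath n) (s x : ℤ) : ℤ :=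
  if x < s then P.ht (x + 1) else if x = s then P.ht s + 1 else P.ht (x - 1)

/-- Spread of a tile at column `s`: points left of `s` move left, points right of `s`
move right, and a point at column `s` is duplicated upward. -/
def spreadTile (s : ℤ) (t : Finset (ℤ × ℤ)) : Finset (ℤ × ℤ) :=
  ((t.filter fun p => p.1 ≤ s).image fun p => (p.1 - 1, p.2)) ∪
    ((t.filter fun p => p.1 = s).image fun p => (p.1, p.2 + 1)) ∪
    ((t.filter fun p => s ≤ p.1).image fun p => (p.1 + 1, p.2))

/-- Spread of a set of tiles at column `s`. -/
def spreadTiles (s : ℤ) (ts : Finset (Finset (ℤ × ℤ))) : Finset (Finset (ℤ × ℤ)) :=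
  ts.image (spreadTile s)

/-- Column `c` is eligible for a tiling with upper-boundary height function `h` and
tile set `ts`: the upper boundary has an up step ending at column `c`, and its point at
column `c` is not the top corner of a one-box tile. -/
def EligibleCol (h : ℤ → ℤ) (ts : Finset (Finset (ℤ × ℤ))) (c : ℤ) : Prop :=
  h c = h (c - 1) + 1 ∧ ({(c, h c - 2)} : Finset (ℤ × ℤ)) ∉ ts

/-- `T'` is the result of the strip-grow map applied to `(T, s)`: spread `T` at `s` and
add a one-box tile on each up step of the (spread) upper boundary starting at a column
`≥ s` (i.e. strictly to the right of column `s`). -/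
def StripGrowRel {n : ℕ} (T : DyckTiling n) (s : ℤ) (T' : DyckTiling (n + 1)) : Prop :=
  (∀ x : ℤ, T'.lower.ht x = spreadHt T.lower s x) ∧
  (∀ x : ℤ, T'.upper.ht x =
    if s ≤ x ∧ spreadHt T.upper s (x + 1) = spreadHt T.upper s x + 1 then
      spreadHt T.upper s x + 2
    else spreadHt T.upper s x) ∧
  T'.tiles = spreadTiles s T.tiles ∪
    ((Finset.Icc s (n : ℤ)).filter fun x =>
        spreadHt T.upper s (x + 1) = spreadHt T.upper s x + 1).image
      (fun x => ({(x, spreadHt T.upper s x)} : Finset (ℤ × ℤ)))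

/-- `T'` is the result of the ribbon-grow map applied to `(T, s)`: spread `T` at `s`,
and if the special column `Q` of the spread tiling is strictly right of `s`, add a
ribbon of one-box tiles at all columns strictly between `s` and `Q`. -/
def RibbonGrowRel {n : ℕ} (T : DyckTiling n) (s : ℤ) (T' : DyckTiling (n + 1)) : Prop :=
  (∀ x : ℤ, T'.lower.ht x = spreadHt T.lower s x) ∧
  ∃ Q : ℤ,
    EligibleCol (spreadHt T.upper s) (spreadTiles s T.tiles) Q ∧
    (∀ c : ℤ, EligibleCol (spreadHt T.upper s) (spreadTiles s T.tiles) c → c ≤ Q) ∧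
    (∀ x : ℤ, T'.upper.ht x =
      if s < x ∧ x < Q then spreadHt T.upper s x + 2 else spreadHt T.upper s x) ∧
    T'.tiles = spreadTiles s T.tiles ∪
      (Finset.Ioo s Q).image (fun x => ({(x, spreadHt T.upper s x)} : Finset (ℤ × ℤ)))

/-- `s` is the special column of `T`: its rightmost eligible column. -/
def SpecialCol {n : ℕ} (T : DyckTiling n) (s : ℤ) : Prop :=
  EligibleCol T.upper.ht T.tiles s ∧ ∀ c : ℤ, EligibleCol T.upper.ht T.tiles c → c ≤ s

/-- In the strip-shrink map applied to `T'` with special column `s`, a one-box tile is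
removed at column `x`: `x` is right of `s` and there is a one-box tile there that is
part of an up step of the upper boundary. -/
def StripRemovedAt {n : ℕ} (T' : DyckTiling n) (s x : ℤ) : Prop :=
  s < x ∧ T'.upper.ht x = T'.upper.ht (x - 1) + 1 ∧
    ({(x, T'.upper.ht x - 2)} : Finset (ℤ × ℤ)) ∈ T'.tiles

instance {n : ℕ} (T' : DyckTiling n) (s x : ℤ) : Decidable (StripRemovedAt T' s x) := by
  unfold StripRemovedAt; infer_instance

/-- `(T, s)` is the result of the strip-shrink map applied to `T'`: `s` is the special
column of `T'`; all one-box tiles right of `s` lying on up steps of the upper boundary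
are removed; and the result is the spread of `T` at `s`. -/
def StripShrinkRel {n : ℕ} (T' : DyckTiling (n + 1)) (T : DyckTiling n) (s : ℤ) : Prop :=
  SpecialCol T' s ∧
  (∀ x : ℤ, spreadHt T.lower s x = T'.lower.ht x) ∧
  (∀ x : ℤ, spreadHt T.upper s x =
    if StripRemovedAt T' s x then T'.upper.ht x - 2 else T'.upper.ht x) ∧
  spreadTiles s T.tiles =
    T'.tiles \ (((Finset.Ioc s ((n : ℤ) + 1)).filter fun x => StripRemovedAt T' s x).image
      fun x => ({(x, T'.upper.ht x - 2)} : Finset (ℤ × ℤ)))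

/-- `(T, s)` is the result of the ribbon-shrink map applied to `T'`: `s` is the special
column of `T'`; the maximal run of topmost one-box tiles in columns `s+1, s+2, …` is
removed; and the result is the spread of `T` at `s`. -/
def RibbonShrinkRel {n : ℕ} (T' : DyckTiling (n + 1)) (T : DyckTiling n) (s : ℤ) : Prop :=
  SpecialCol T' s ∧
  ∃ r : ℤ, s < r ∧
    (∀ x : ℤ, s < x → x < r → ({(x, T'.upper.ht x - 2)} : Finset (ℤ × ℤ)) ∈ T'.tiles) ∧
    ({(r, T'.upper.ht r - 2)} : Finset (ℤ × ℤ)) ∉ T'.tiles ∧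
    (∀ x : ℤ, spreadHt T.lower s x = T'.lower.ht x) ∧
    (∀ x : ℤ, spreadHt T.upper s x =
      if s < x ∧ x < r then T'.upper.ht x - 2 else T'.upper.ht x) ∧
    spreadTiles s T.tiles =
      T'.tiles \ ((Finset.Ioo s r).image fun x => ({(x, T'.upper.ht x - 2)} : Finset (ℤ × ℤ)))

/-- `IsDTS n p T`: `T` is the Dyck tiling `DTS(p_1, …, p_n)` (indices 0-based, so the
growth column for step `i` is `p i - i`). -/
inductive IsDTS : (n : ℕ) → (Fin n → ℕ) → DyckTiling n → Prop where
  | nil (p : Fin 0 → ℕ) (T : DyckTiling 0) : IsDTS 0 p T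
  | cons (n : ℕ) (p : Fin (n + 1) → ℕ) (T : DyckTiling n) (T' : DyckTiling (n + 1)) :
      IsDTS n (fun i => p i.castSucc) T →
      StripGrowRel T ((p (Fin.last n) : ℤ) - n) T' → IsDTS (n + 1) p T'

/-- `IsDTR n p T`: `T` is the Dyck tiling `DTR(p_1, …, p_n)`. -/
inductive IsDTR : (n : ℕ) → (Fin n → ℕ) → DyckTiling n → Prop where
  | nil (p : Fin 0 → ℕ) (T : DyckTiling 0) : IsDTR 0 p T
  | cons (n : ℕ) (p : Fin (n + 1) → ℕ) (T : DyckTiling n) (T' : DyckTiling (n + 1)) :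
      IsDTR n (fun i => p i.castSucc) T →
      RibbonGrowRel T ((p (Fin.last n) : ℤ) - n) T' → IsDTR (n + 1) p T'

/-- `T = DTS(λ, σ)`. -/
def IsDTSof {n : ℕ} (lam : DyckPath n) (σ : Equiv.Perm (Fin n)) (T : DyckTiling n) : Prop :=
  ∃ C : ChordLabeling lam, IsStandardization C.l σ ∧ IsDTS n (seqOf C) T

/-- `T = DTR(λ, σ)`. -/
def IsDTRof {n : ℕ} (lam : DyckPath n) (σ : Equiv.Perm (Fin n)) (T : DyckTiling n) : Prop :=
  ∃ C : ChordLabeling lam, IsStandardization C.l σ ∧ IsDTR n (seqOf C) T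

/-- Increment `a` if it exceeds `p`. -/
def bump (p a : ℕ) : ℕ := if p < a then a + 1 else a

/-- The perfect matching `match(p_1, …, p_n)` of `{1, …, 2n}`. -/
def matchSeq : (n : ℕ) → (Fin n → ℕ) → Finset (ℕ × ℕ)
  | 0, _ => ∅
  | n + 1, p =>
    ((matchSeq n fun i => p i.castSucc).image fun q =>
      (bump (p (Fin.last n)) q.1, bump (p (Fin.last n)) q.2)) ∪
      {(p (Fin.last n) + 1, 2 * (n + 1))}

/-- The number of nestings of a matching: pairs `(a,b)`, `(c,d)` with `c < a < b < d`. -/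
def nestings (M : Finset (ℕ × ℕ)) : ℕ :=
  ((M ×ˢ M).filter fun q => q.2.1 < q.1.1 ∧ q.1.1 < q.1.2 ∧ q.1.2 < q.2.2).card

/-- `w` is the min-word of `M`: the list of the smaller elements of the pairs of `M`,
sorted by the larger elements. -/
def IsMinWord (n : ℕ) (M : Finset (ℕ × ℕ)) (w : Fin n → ℕ) : Prop :=
  ∃ b : Fin n → ℕ, StrictMono b ∧ (∀ i, w i < b i) ∧
    M = Finset.univ.image fun i => (w i, b i)

/-- The number of tiles of `T` containing boxes over both endpoint columns of the
chord with endpoints at step positions `p < q`. -/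
def chordTileCount {n : ℕ} (T : DyckTiling n) (p q : ℕ) : ℕ :=
  (T.tiles.filter fun t =>
    (∃ c ∈ t, (c : ℤ × ℤ).1 = (p : ℤ) + 1 - n) ∧ (∃ c ∈ t, (c : ℤ × ℤ).1 = (q : ℤ) - n)).card

/-- A Dyck tableau of order `n` over the zigzag path `Z` of order `n+1`: a skew shape
`Z/μ` with `n` dots, one in each column of the skew shape through a valley of `Z`. -/
structure DyckTableau (n : ℕ) (Z : DyckPath (n + 1)) where
  upper : DyckPath (n + 1)
  below : ∀ x : ℤ, Z.ht x ≤ upper.ht x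
  dots : Finset (ℤ × ℤ)
  sub : dots ⊆ skewCells Z upper
  card_dots : dots.card = n
  valley : ∀ x : ℤ, Z.ht (x - 1) = Z.ht x + 1 → Z.ht (x + 1) = Z.ht x + 1 →
    (dots.filter fun c => c.1 = x).card = 1

/-- The `q`-integer `[m]_q = 1 + q + ⋯ + q^(m-1)` as a polynomial. -/
def qint (m : ℕ) : Polynomial ℤ := ∑ i ∈ Finset.range m, Polynomial.X ^ i

/-- The `q`-factorial `[n]_q!`. -/
def qfact (n : ℕ) : Polynomial ℤ := ∏ i ∈ Finset.range n, qint (i + 1)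

/-- The height functions of Dyck paths of order `n`, extended by `0` outside `[-n, n]`. -/
structure IsHt (n : ℕ) (h : ℤ → ℤ) : Prop where
  left : ∀ x : ℤ, x ≤ -n → h x = 0
  right : ∀ x : ℤ, (n : ℤ) ≤ x → h x = 0
  step : ∀ x : ℤ, -n ≤ x → x < n → h (x + 1) = h x + 1 ∨ h (x + 1) = h x - 1
  nonneg : ∀ x : ℤ, 0 ≤ h x

namespace IsHt

variable {n : ℕ} {h : ℤ → ℤ}

theorem parity (H : IsHt n h) {x : ℤ} (hx : -n ≤ x) (hx' : x ≤ n) : (h x - x - n) % 2 = 0 := by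
  obtain ⟨k, rfl⟩ : ∃ k : ℕ, x = -n + k := ⟨(x + n).toNat, by omega⟩
  clear hx
  induction k with
  | zero => have := H.left (-n) le_rfl; simp [this]
  | succ k ih =>
    have h1 := ih (by push_cast at hx'; omega)
    have h2 := H.step (-n + k) (by omega) (by push_cast at hx'; omega)
    push_cast
    rw [← add_assoc]
    omega

theorem le_add (H : IsHt n h) (k : ℕ) (hk : k ≤ 2 * n) : h (-n + k) ≤ k := by
  induction k with
  | zero => have := H.left (-n) le_rfl; simp [this]
  | succ k ih =>
    have h1 := ih (by omega)
    have h2 := H.step (-n + k) (by omega) (by omega)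
    push_cast
    rw [← add_assoc]
    omega

theorem le_sub (H : IsHt n h) (k : ℕ) (hk : k ≤ 2 * n) : h (n - k) ≤ k := by
  induction k with
  | zero => have := H.right n le_rfl; simp [this]
  | succ k ih =>
    have h1 := ih (by omega)
    have h2 := H.step (n - (k + 1)) (by omega) (by omega)
    rw [show (n : ℤ) - (k + 1) + 1 = n - k by ring] at h2
    push_cast
    omega

theorem le_order (H : IsHt n h) (x : ℤ) : h x ≤ n := by
  by_cases h1 : x ≤ -n
  · have := H.left x h1; omega
  by_cases h2 : (n : ℤ) ≤ x
  · have := H.right x h2; omega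
  have e1 := H.le_add (x + n).toNat (by omega)
  have e2 := H.le_sub (n - x).toNat (by omega)
  rw [show -(n : ℤ) + ((x + n).toNat : ℤ) = x by omega] at e1
  rw [show (n : ℤ) - ((n - x).toNat : ℤ) = x by omega] at e2
  omega

end IsHt

/-- The number of steps `b` among the first `k` steps of a word. -/
def stepCount {m : ℕ} (w : Fin m → Bool) (b : Bool) (k : ℕ) : ℕ :=
  (Finset.univ.filter fun i : Fin m => (i : ℕ) < k ∧ w i = b).card

theorem stepCount_zero {m : ℕ} (w : Fin m → Bool) (b : Bool) : stepCount w b 0 = 0 := by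
  simp [stepCount]

theorem stepCount_succ {m : ℕ} (w : Fin m → Bool) (b : Bool) (i : Fin m) :
    stepCount w b (i + 1) = stepCount w b i + if w i = b then 1 else 0 := by
  unfold stepCount
  split_ifs with hb
  · rw [show (Finset.univ.filter fun j : Fin m => (j : ℕ) < i + 1 ∧ w j = b) =
      insert i (Finset.univ.filter fun j : Fin m => (j : ℕ) < i ∧ w j = b) from ?_,
      Finset.card_insert_of_notMem (by simp)]
    ext j
    simp only [mem_filter, mem_univ, true_and, mem_insert]
    constructor
    · rintro ⟨h1, h2⟩
      rcases Nat.lt_succ_iff_lt_or_eq.1 h1 with h | h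
      · exact Or.inr ⟨h, h2⟩
      · exact Or.inl (Fin.ext h)
    · rintro (rfl | ⟨h1, h2⟩)
      · exact ⟨by omega, hb⟩
      · exact ⟨by omega, h2⟩
  · rw [add_zero]
    congr 1
    ext j
    simp only [mem_filter, mem_univ, true_and]
    constructor
    · rintro ⟨h1, h2⟩
      rcases Nat.lt_succ_iff_lt_or_eq.1 h1 with h | h
      · exact ⟨h, h2⟩
      · exact absurd (Fin.ext h ▸ h2) hb
    · rintro ⟨h1, h2⟩
      exact ⟨by omega, h2⟩

theorem stepCount_add {m : ℕ} (w : Fin m → Bool) (k : ℕ) (hk : k ≤ m) :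
    stepCount w true k + stepCount w false k = k := by
  induction k with
  | zero => simp [stepCount_zero]
  | succ k ih =>
    have h1 := stepCount_succ w true ⟨k, hk⟩
    have h2 := stepCount_succ w false ⟨k, hk⟩
    have := ih (by omega)
    simp only at h1 h2
    rw [h1, h2]
    cases w ⟨k, hk⟩ <;> simp <;> omega

theorem stepCount_all {m : ℕ} (w : Fin m → Bool) (b : Bool) :
    stepCount w b m = (Finset.univ.filter fun i => w i = b).card := by
  simp [stepCount]

namespace DyckPath

variable {n : ℕ} (P : DyckPath n)

theorem ht_eq_stepCount (k : ℕ) (x : ℤ) (hx : x + n = k) :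
    P.ht x = (stepCount P.step true k : ℤ) - stepCount P.step false k := by
  simp only [ht, stepCount, hx, Nat.cast_lt]

theorem ht_step (i : Fin (2 * n)) :
    P.ht ((i : ℕ) - n + 1) = P.ht ((i : ℕ) - n) + if P.step i = true then 1 else -1 := by
  rw [P.ht_eq_stepCount (i + 1) _ (by push_cast; ring), P.ht_eq_stepCount i _ (by ring),
    stepCount_succ, stepCount_succ]
  cases P.step i <;> simp <;> ring

theorem isHt : IsHt n P.ht where
  left x hx := by
    have : ∀ i : Fin (2 * n), ¬ ((i : ℕ) : ℤ) < x + n := fun i => by omega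
    simp [ht, this]
  right x hx := by
    have hi : ∀ i : Fin (2 * n), ((i : ℕ) : ℤ) < x + n := fun i => by omega
    have h1 := stepCount_add P.step (2 * n) le_rfl
    rw [stepCount_all, stepCount_all, P.balanced] at h1
    simp only [ht, hi, true_and, P.balanced]
    omega
  step x hx hx' := by
    have := P.ht_step ⟨(x + n).toNat, by omega⟩
    simp only [show (((x + n).toNat : ℕ) : ℤ) - n = x by omega] at this
    rw [this]
    split_ifs
    · exact Or.inl rfl
    · exact Or.inr rfl
  nonneg x := by
    by_cases h1 : x ≤ -n
    · have : ∀ i : Fin (2 * n), ¬ ((i : ℕ) : ℤ) < x + n := fun i => by omega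
      simp [ht, this]
    by_cases h2 : (n : ℤ) ≤ x
    · have hi : ∀ i : Fin (2 * n), ((i : ℕ) : ℤ) < x + n := fun i => by omega
      have h1 := stepCount_add P.step (2 * n) le_rfl
      rw [stepCount_all, stepCount_all, P.balanced] at h1
      simp only [ht, hi, true_and, P.balanced]
      omega
    rw [P.ht_eq_stepCount (x + n).toNat x (by omega)]
    have := P.nonneg (x + n).toNat (by omega)
    simp only [stepCount]
    omega

theorem ht_injective {P Q : DyckPath n} (h : ∀ x, P.ht x = Q.ht x) : P = Q := by
  have : P.step = Q.step := by
    funext i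
    have h1 := P.ht_step i
    rw [h, h, Q.ht_step i] at h1
    revert h1
    cases P.step i <;> cases Q.step i <;> simp
  cases P; cases Q; simp_all

theorem exists_of_isHt {h : ℤ → ℤ} (H : IsHt n h) : ∃ P : DyckPath n, ∀ x, P.ht x = h x := by
  let w : Fin (2 * n) → Bool := fun i => decide (h ((i : ℕ) - n + 1) = h ((i : ℕ) - n) + 1)
  have key : ∀ k : ℕ, k ≤ 2 * n →
      (stepCount w true k : ℤ) - stepCount w false k = h ((k : ℤ) - n) := by
    intro k hk
    induction k with
    | zero => simp [stepCount_zero, H.left (-n) le_rfl]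
    | succ k ih =>
      have h0 := ih (by omega)
      have h1 := stepCount_succ w true ⟨k, hk⟩
      have h2 := stepCount_succ w false ⟨k, hk⟩
      have h3 := H.step ((k : ℤ) - n) (by omega) (by omega)
      simp only at h1 h2
      rw [h1, h2]
      push_cast
      rw [show (k : ℤ) + 1 - n = k - n + 1 by ring]
      by_cases hs : h ((k : ℤ) - n + 1) = h ((k : ℤ) - n) + 1
      · have : w ⟨k, hk⟩ = true := by simp [w, hs]
        simp [this]; omega
      · have : w ⟨k, hk⟩ = false := by simp [w, hs]
        simp [this]; omega
  have kb : (Finset.univ.filter fun i => w i = true).card = n := by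
    have h1 := key (2 * n) le_rfl
    have h2 := stepCount_add w (2 * n) le_rfl
    rw [H.right _ (by push_cast; omega)] at h1
    rw [← stepCount_all]
    omega
  refine ⟨⟨w, kb, fun k hk => ?_⟩, fun x => ?_⟩
  · have h1 := key k hk
    have h2 := H.nonneg ((k : ℤ) - n)
    simp only [stepCount] at h1
    omega
  · by_cases h1 : x ≤ -n
    · rw [H.left x h1, (isHt _).left x h1]
    by_cases h2 : (n : ℤ) ≤ x
    · rw [H.right x h2, (isHt _).right x h2]
    rw [ht_eq_stepCount _ (x + n).toNat x (by omega), key _ (by omega)]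
    congr 1
    omega

end DyckPath

/-- Spread of a height function at column `s`. -/
def spreadFun (s : ℤ) (h : ℤ → ℤ) (x : ℤ) : ℤ :=
  if x < s then h (x + 1) else if x = s then h s + 1 else h (x - 1)

/-- Inverse of the spread of a height function at column `s`, for functions with a peak at `s`. -/
def contractFun (s : ℤ) (h : ℤ → ℤ) (x : ℤ) : ℤ :=
  if x ≤ s then h (x - 1) else h (x + 1)

/-- The function `h` has a peak at column `s`. -/
def PeakAt (s : ℤ) (h : ℤ → ℤ) : Prop := h (s - 1) = h s - 1 ∧ h (s + 1) = h s - 1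

section spreadFun

variable {s x : ℤ} {h : ℤ → ℤ} {n : ℕ}

theorem spreadFun_of_lt (hx : x < s) : spreadFun s h x = h (x + 1) := by
  simp [spreadFun, hx]

theorem spreadFun_self : spreadFun s h s = h s + 1 := by
  simp [spreadFun]

theorem spreadFun_of_gt (hx : s < x) : spreadFun s h x = h (x - 1) := by
  simp [spreadFun, hx.not_gt, hx.ne']

theorem contractFun_of_le (hx : x ≤ s) : contractFun s h x = h (x - 1) := by
  simp [contractFun, hx]

theorem contractFun_of_gt (hx : s < x) : contractFun s h x = h (x + 1) := by
  simp [contractFun, hx.not_ge]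

theorem peakAt_spreadFun (s : ℤ) (h : ℤ → ℤ) : PeakAt s (spreadFun s h) := by
  refine ⟨?_, ?_⟩
  · rw [spreadFun_of_lt (by omega), spreadFun_self]; simp
  · rw [spreadFun_of_gt (by omega), spreadFun_self]; simp

theorem contractFun_spreadFun (s : ℤ) (h : ℤ → ℤ) : contractFun s (spreadFun s h) = h := by
  funext x
  rcases le_or_gt x s with hx | hx
  · rw [contractFun_of_le hx, spreadFun_of_lt (by omega)]; simp
  · rw [contractFun_of_gt hx, spreadFun_of_gt (by omega)]; simp

theorem spreadFun_injective (s : ℤ) : Function.Injective (spreadFun s) :=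
  Function.LeftInverse.injective (contractFun_spreadFun s)

theorem spreadFun_contractFun (hp : PeakAt s h) : spreadFun s (contractFun s h) = h := by
  funext x
  rcases lt_trichotomy x s with hx | rfl | hx
  · rw [spreadFun_of_lt hx, contractFun_of_le (by omega)]; simp
  · rw [spreadFun_self, contractFun_of_le le_rfl, hp.1]; simp
  · rw [spreadFun_of_gt hx]
    rcases eq_or_lt_of_le (show s + 1 ≤ x by omega) with rfl | hx'
    · rw [contractFun_of_le (by omega), hp.2]; simp [hp.1]
    · rw [contractFun_of_gt (by omega)]; simp

theorem IsHt.spread (H : IsHt n h) (hs : -n ≤ s) (hs' : s ≤ n) : IsHt (n + 1) (spreadFun s h) where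
  left x hx := by
    rw [spreadFun_of_lt (by push_cast at hx; omega)]
    exact H.left _ (by push_cast at hx; omega)
  right x hx := by
    rw [spreadFun_of_gt (by push_cast at hx; omega)]
    exact H.right _ (by push_cast at hx; omega)
  step x hx hx' := by
    push_cast at hx hx'
    rcases lt_trichotomy x s with h1 | rfl | h1
    · rcases eq_or_lt_of_le (show x + 1 ≤ s by omega) with rfl | h2
      · rw [spreadFun_self, spreadFun_of_lt h1]; exact Or.inl rfl
      · rw [spreadFun_of_lt h1, spreadFun_of_lt h2]
        exact H.step _ (by omega) (by omega)
    · rw [spreadFun_self, spreadFun_of_gt (by omega)]; right; simp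
    · rw [spreadFun_of_gt h1, spreadFun_of_gt (by omega)]
      have := H.step (x - 1) (by omega) (by omega)
      simpa using this
  nonneg x := by
    unfold spreadFun
    have := H.nonneg s
    split_ifs
    · exact H.nonneg _
    · omega
    · exact H.nonneg _

theorem IsHt.peak_bounds (H : IsHt (n + 1) h) (hp : PeakAt s h) : -n ≤ s ∧ s ≤ n := by
  have h1 := H.nonneg (s - 1)
  have h2 := H.left s
  have h3 := H.right s
  have h4 := hp.1
  push_cast at h2 h3
  constructor
  · by_contra hc; have := h2 (by omega); omega
  · by_contra hc; have := h3 (by omega); omega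

theorem IsHt.contract (H : IsHt (n + 1) h) (hp : PeakAt s h) : IsHt n (contractFun s h) := by
  obtain ⟨hs, hs'⟩ := H.peak_bounds hp
  have e : h (s - 1) = h (s + 1) := by rw [hp.1, hp.2]
  refine ⟨fun x hx => ?_, fun x hx => ?_, fun x hx hx' => ?_, fun x => ?_⟩
  · rw [contractFun_of_le (by omega)]
    exact H.left _ (by push_cast; omega)
  · rcases eq_or_lt_of_le (hs'.trans hx) with rfl | h1
    · rw [contractFun_of_le le_rfl, e]
      exact H.right _ (by push_cast; omega)
    · rw [contractFun_of_gt h1]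
      exact H.right _ (by push_cast; omega)
  · rcases lt_trichotomy x s with h1 | rfl | h1
    · rw [contractFun_of_le h1.le, contractFun_of_le (by omega)]
      have := H.step (x - 1) (by push_cast; omega) (by push_cast; omega)
      simpa using this
    · rw [contractFun_of_le le_rfl, contractFun_of_gt (by omega), e]
      exact H.step (x + 1) (by push_cast; omega) (by push_cast; omega)
    · rw [contractFun_of_gt h1, contractFun_of_gt (by omega)]
      exact H.step (x + 1) (by push_cast; omega) (by push_cast; omega)
  · unfold contractFun
    split_ifs <;> exact H.nonneg _

end spreadFun

/-- Inverse of the spread of a tile at column `s`. -/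
def contractTile (s : ℤ) (t : Finset (ℤ × ℤ)) : Finset (ℤ × ℤ) :=
  ((t.filter fun p => p.1 < s).image fun p => (p.1 + 1, p.2)) ∪
    ((t.filter fun p => s < p.1).image fun p => (p.1 - 1, p.2))

/-- At column `s` the tile `t` has a peak, or it avoids the columns `s - 1`, `s` and `s + 1`. -/
def TilePeakAt (s : ℤ) (t : Finset (ℤ × ℤ)) : Prop :=
  ∀ z, ((s - 1, z) ∈ t ↔ (s, z + 1) ∈ t) ∧ ((s + 1, z) ∈ t ↔ (s, z + 1) ∈ t)

section tiles

variable {s x z : ℤ} {t : Finset (ℤ × ℤ)}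

theorem mem_spreadTile : (x, z) ∈ spreadTile s t ↔
    (x < s ∧ (x + 1, z) ∈ t) ∨ (x = s ∧ (s, z - 1) ∈ t) ∨ (s < x ∧ (x - 1, z) ∈ t) := by
  simp only [spreadTile, mem_union, mem_image, mem_filter, Prod.mk.injEq, Prod.exists]
  constructor
  · rintro ((⟨a, b, ⟨h1, h2⟩, rfl, rfl⟩ | ⟨a, b, ⟨h1, rfl⟩, rfl, rfl⟩) | ⟨a, b, ⟨h1, h2⟩, rfl, rfl⟩)
    · exact Or.inl ⟨by omega, by simpa using h1⟩
    · exact Or.inr (Or.inl ⟨rfl, by simpa using h1⟩)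
    · exact Or.inr (Or.inr ⟨by omega, by simpa using h1⟩)
  · rintro (⟨h1, h2⟩ | ⟨rfl, h2⟩ | ⟨h1, h2⟩)
    · exact Or.inl (Or.inl ⟨_, _, ⟨h2, by omega⟩, by omega, rfl⟩)
    · exact Or.inl (Or.inr ⟨_, _, ⟨h2, rfl⟩, rfl, by omega⟩)
    · exact Or.inr ⟨_, _, ⟨h2, by omega⟩, by omega, rfl⟩

theorem mem_contractTile : (x, z) ∈ contractTile s t ↔
    (x ≤ s ∧ (x - 1, z) ∈ t) ∨ (s ≤ x ∧ (x + 1, z) ∈ t) := by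
  simp only [contractTile, mem_union, mem_image, mem_filter, Prod.mk.injEq, Prod.exists]
  constructor
  · rintro (⟨a, b, ⟨h1, h2⟩, rfl, rfl⟩ | ⟨a, b, ⟨h1, h2⟩, rfl, rfl⟩)
    · exact Or.inl ⟨by omega, by simpa using h1⟩
    · exact Or.inr ⟨by omega, by simpa using h1⟩
  · rintro (⟨h1, h2⟩ | ⟨h1, h2⟩)
    · exact Or.inl ⟨_, _, ⟨h2, by omega⟩, by omega, rfl⟩
    · exact Or.inr ⟨_, _, ⟨h2, by omega⟩, by omega, rfl⟩

theorem contractTile_spreadTile (s : ℤ) (t : Finset (ℤ × ℤ)) :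
    contractTile s (spreadTile s t) = t := by
  ext ⟨x, z⟩
  rw [mem_contractTile, mem_spreadTile, mem_spreadTile]
  simp only [sub_add_cancel, add_sub_cancel_right]
  constructor
  · rintro (⟨h1, ⟨-, h⟩ | ⟨h, -⟩ | ⟨h, -⟩⟩ | ⟨h1, ⟨h, -⟩ | ⟨h, -⟩ | ⟨-, h⟩⟩) <;>
      first | exact h | (exfalso; omega)
  · intro h
    rcases le_or_gt x s with hx | hx
    · exact Or.inl ⟨hx, Or.inl ⟨by omega, h⟩⟩
    · exact Or.inr ⟨hx.le, Or.inr (Or.inr ⟨by omega, h⟩)⟩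

theorem spreadTile_injective (s : ℤ) : Function.Injective (spreadTile s) :=
  Function.LeftInverse.injective (contractTile_spreadTile s)

theorem spreadTiles_injective (s : ℤ) : Function.Injective (spreadTiles s) :=
  Finset.image_injective (spreadTile_injective s)

theorem spreadTile_contractTile (ht : TilePeakAt s t) : spreadTile s (contractTile s t) = t := by
  ext ⟨x, z⟩
  rw [mem_spreadTile, mem_contractTile, mem_contractTile, mem_contractTile]
  simp only [sub_add_cancel, add_sub_cancel_right]
  obtain ⟨p1, p2⟩ := ht z
  obtain ⟨q1, q2⟩ := ht (z - 1)
  rw [sub_add_cancel] at q1 q2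
  constructor
  · rintro (⟨h1, ⟨-, h⟩ | ⟨h2, h⟩⟩ | ⟨rfl, ⟨-, h⟩ | ⟨-, h⟩⟩ | ⟨h1, ⟨h2, h⟩ | ⟨-, h⟩⟩)
    · exact h
    · obtain rfl : x = s - 1 := by omega
      rw [show s - 1 + 1 + 1 = s + 1 by ring] at h
      exact p1.2 (p2.1 h)
    · exact q1.1 h
    · exact q2.1 h
    · obtain rfl : x = s + 1 := by omega
      rw [show s + 1 - 1 - 1 = s - 1 by ring] at h
      exact p2.2 (p1.1 h)
    · exact h
  · intro h
    rcases lt_trichotomy x s with hx | rfl | hx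
    · exact Or.inl ⟨hx, Or.inl ⟨by omega, h⟩⟩
    · exact Or.inr (Or.inl ⟨rfl, Or.inl ⟨le_rfl, q1.2 h⟩⟩)
    · exact Or.inr (Or.inr ⟨hx, Or.inr ⟨by omega, h⟩⟩)

theorem mem_graph {a b : ℤ} {f : ℤ → ℤ} :
    (x, z) ∈ (Finset.Icc a b).image (fun x => (x, f x)) ↔ a ≤ x ∧ x ≤ b ∧ z = f x := by
  simp only [mem_image, mem_Icc, Prod.mk.injEq]
  constructor
  · rintro ⟨y, ⟨h1, h2⟩, rfl, rfl⟩; exact ⟨h1, h2, rfl⟩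
  · rintro ⟨h1, h2, rfl⟩; exact ⟨x, ⟨h1, h2⟩, rfl, rfl⟩

theorem isDyckTile_singleton (x z : ℤ) : IsDyckTile {(x, z)} :=
  ⟨x, x, fun _ => z, le_rfl, fun y h1 h2 => by omega, rfl, fun _ _ _ => le_rfl, by simp⟩

theorem IsDyckTile.spread (ht : IsDyckTile t) (s : ℤ) : IsDyckTile (spreadTile s t) := by
  obtain ⟨a, b, f, hab, hstep, hend, hmin, rfl⟩ := ht
  have hmem : ∀ a' b' : ℤ, (∀ x : ℤ, a' ≤ x ∧ x ≤ b' ↔ (x < s ∧ a ≤ x + 1 ∧ x + 1 ≤ b) ∨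
      (x = s ∧ a ≤ s ∧ s ≤ b) ∨ (s < x ∧ a ≤ x - 1 ∧ x - 1 ≤ b)) →
      spreadTile s ((Finset.Icc a b).image fun x => (x, f x)) =
        (Finset.Icc a' b').image fun x => (x, spreadFun s f x) := by
    intro a' b' H
    ext ⟨x, z⟩
    rw [mem_spreadTile, mem_graph, mem_graph, mem_graph, mem_graph]
    have := H x
    rcases lt_trichotomy x s with hx | rfl | hx
    · rw [spreadFun_of_lt hx]; grind
    · rw [spreadFun_self]; grind
    · rw [spreadFun_of_gt hx]; grind
  rcases lt_or_ge b s with h1 | h1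
  · refine ⟨a - 1, b - 1, spreadFun s f, by omega, fun x hx hx' => ?_, ?_, fun x hx hx' => ?_,
      hmem _ _ fun x => by omega⟩
    · rw [spreadFun_of_lt (by omega), spreadFun_of_lt (by omega)]
      exact hstep _ (by omega) (by omega)
    · rw [spreadFun_of_lt (by omega), spreadFun_of_lt (by omega)]; simpa using hend
    · rw [spreadFun_of_lt (by omega), spreadFun_of_lt (by omega)]
      simpa using hmin (x + 1) (by omega) (by omega)
  rcases lt_or_ge s a with h2 | h2
  · refine ⟨a + 1, b + 1, spreadFun s f, by omega, fun x hx hx' => ?_, ?_, fun x hx hx' => ?_,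
      hmem _ _ fun x => by omega⟩
    · rw [spreadFun_of_gt (by omega), spreadFun_of_gt (by omega)]
      simpa using hstep (x - 1) (by omega) (by omega)
    · rw [spreadFun_of_gt (by omega), spreadFun_of_gt (by omega)]; simpa using hend
    · rw [spreadFun_of_gt (by omega), spreadFun_of_gt (by omega)]
      simpa using hmin (x - 1) (by omega) (by omega)
  · refine ⟨a - 1, b + 1, spreadFun s f, by omega, fun x hx hx' => ?_, ?_, fun x hx hx' => ?_,
      hmem _ _ fun x => by omega⟩
    · rcases lt_trichotomy x s with h3 | rfl | h3
      · rw [spreadFun_of_lt h3]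
        rcases eq_or_lt_of_le (show x + 1 ≤ s by omega) with rfl | h4
        · rw [spreadFun_self]; simp
        · rw [spreadFun_of_lt h4]; exact hstep _ (by omega) (by omega)
      · rw [spreadFun_self, spreadFun_of_gt (by omega)]; simp
      · rw [spreadFun_of_gt h3, spreadFun_of_gt (by omega)]
        simpa using hstep (x - 1) (by omega) (by omega)
    · rw [spreadFun_of_gt (by omega), spreadFun_of_lt (by omega)]; simpa using hend
    · rw [spreadFun_of_lt (show a - 1 < s by omega), sub_add_cancel]
      rcases lt_trichotomy x s with h3 | rfl | h3
      · rw [spreadFun_of_lt h3]; exact hmin _ (by omega) (by omega)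
      · rw [spreadFun_self]; have := hmin x h2 h1; omega
      · rw [spreadFun_of_gt h3]; exact hmin _ (by omega) (by omega)

theorem IsDyckTile.contract (ht : IsDyckTile t) (hp : TilePeakAt s t) :
    IsDyckTile (contractTile s t) := by
  obtain ⟨a, b, f, hab, hstep, hend, hmin, rfl⟩ := ht
  have hp' : ∀ x : ℤ, x = s - 1 ∨ x = s ∨ x = s + 1 → a ≤ x → x ≤ b →
      a < s ∧ s < b ∧ f (s - 1) = f s - 1 ∧ f (s + 1) = f s - 1 := by
    rintro x (rfl | rfl | rfl) h1 h2
    · have e1 := hp (f (s - 1))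
      simp only [mem_graph] at e1
      grind
    · have e1 := hp (f x - 1)
      simp only [mem_graph] at e1
      grind
    · have e1 := hp (f (s + 1))
      simp only [mem_graph] at e1
      grind
  have q1 := hp' (s - 1) (by omega)
  have q2 := hp' s (by omega)
  have q3 := hp' (s + 1) (by omega)
  have hmem : ∀ a' b' : ℤ, (∀ x : ℤ, a' ≤ x ∧ x ≤ b' ↔ (x ≤ s ∧ a ≤ x - 1 ∧ x - 1 ≤ b) ∨
      (s ≤ x ∧ a ≤ x + 1 ∧ x + 1 ≤ b)) →
      contractTile s ((Finset.Icc a b).image fun x => (x, f x)) =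
        (Finset.Icc a' b').image fun x => (x, contractFun s f x) := by
    intro a' b' H
    ext ⟨x, z⟩
    rw [mem_contractTile, mem_graph, mem_graph, mem_graph]
    have := H x
    rcases lt_trichotomy x s with hx | rfl | hx
    · rw [contractFun_of_le hx.le]; grind
    · rw [contractFun_of_le le_rfl]; grind
    · rw [contractFun_of_gt hx]; grind
  rcases lt_or_ge b s with h1 | h1
  · have h1' : b < s - 1 := by
      by_contra hc
      have := q1 (by omega) (by omega)
      omega
    refine ⟨a + 1, b + 1, contractFun s f, by omega, fun x hx hx' => ?_, ?_, fun x hx hx' => ?_,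
      hmem _ _ fun x => by omega⟩
    · rw [contractFun_of_le (by omega), contractFun_of_le (by omega)]
      simpa using hstep (x - 1) (by omega) (by omega)
    · rw [contractFun_of_le (by omega), contractFun_of_le (by omega)]; simpa using hend
    · rw [contractFun_of_le (by omega), contractFun_of_le (by omega)]
      simpa using hmin (x - 1) (by omega) (by omega)
  rcases lt_or_ge s a with h2 | h2
  · have h2' : s + 1 < a := by
      by_contra hc
      have := q3 (by omega) (by omega)
      omega
    refine ⟨a - 1, b - 1, contractFun s f, by omega, fun x hx hx' => ?_, ?_, fun x hx hx' => ?_,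
      hmem _ _ fun x => by omega⟩
    · rw [contractFun_of_gt (by omega), contractFun_of_gt (by omega)]
      exact hstep (x + 1) (by omega) (by omega)
    · rw [contractFun_of_gt (by omega), contractFun_of_gt (by omega)]; simpa using hend
    · rw [contractFun_of_gt (by omega), contractFun_of_gt (by omega)]
      simpa using hmin (x + 1) (by omega) (by omega)
  obtain ⟨h3, h4, h5, h6⟩ := q2 h2 h1
  have e : f (s - 1) = f (s + 1) := by omega
  have ea : contractFun s f (a + 1) = f a := by
    rw [contractFun_of_le (by omega), add_sub_cancel_right]
  have eb : contractFun s f (b - 1) = f b := by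
    rcases eq_or_lt_of_le (show s ≤ b - 1 by omega) with rfl | h7
    · rw [contractFun_of_le le_rfl, e]; simp
    · rw [contractFun_of_gt h7]; simp
  refine ⟨a + 1, b - 1, contractFun s f, by omega, fun x hx hx' => ?_, by rw [ea, eb, hend],
    fun x hx hx' => ?_, hmem _ _ fun x => by omega⟩
  · rcases lt_trichotomy x s with h7 | rfl | h7
    · rw [contractFun_of_le h7.le, contractFun_of_le (by omega)]
      simpa using hstep (x - 1) (by omega) (by omega)
    · rw [contractFun_of_le le_rfl, contractFun_of_gt (by omega), e]
      exact hstep _ (by omega) (by omega)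
    · rw [contractFun_of_gt h7, contractFun_of_gt (by omega)]
      exact hstep _ (by omega) (by omega)
  · rw [ea]
    unfold contractFun
    split_ifs <;> exact hmin _ (by omega) (by omega)

end tiles

/-- Cover-inclusive Dyck tilings of order `n` in terms of the height functions of the two
boundary paths. -/
structure IsCITiling (n : ℕ) (lo up : ℤ → ℤ) (ts : Finset (Finset (ℤ × ℤ))) : Prop where
  lo_isHt : IsHt n lo
  up_isHt : IsHt n up
  le : ∀ x, lo x ≤ up x
  dyck : ∀ t ∈ ts, IsDyckTile t
  disj : ∀ t ∈ ts, ∀ u ∈ ts, ∀ c, c ∈ t → c ∈ u → t = u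
  mem : ∀ x z, (∃ t ∈ ts, (x, z) ∈ t) ↔ lo x ≤ z ∧ z + 2 ≤ up x ∧ (z - x - n) % 2 = 0
  incl : ∀ t ∈ ts, ∀ u ∈ ts, ∀ x y z, (x, z) ∈ t → (x, y) ∈ u → y < z →
    ∀ a b, (a, b) ∈ t → ∃ c, (a, c) ∈ u

theorem mem_skewCells {n : ℕ} {lam mu : DyckPath n} {x z : ℤ} :
    (x, z) ∈ skewCells lam mu ↔
      lam.ht x ≤ z ∧ z + 2 ≤ mu.ht x ∧ (z - x - n) % 2 = 0 := by
  simp only [skewCells, mem_filter, mem_product, mem_Icc, and_iff_right_iff_imp]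
  rintro ⟨h1, h2, -⟩
  have h3 := lam.isHt.nonneg x
  have h4 := mu.isHt.le_order x
  have h5 := mu.isHt.left x
  have h6 := mu.isHt.right x
  refine ⟨⟨?_, ?_⟩, by omega, by omega⟩
  · by_contra hc; have := h5 (by omega); omega
  · by_contra hc; have := h6 (by omega); omega

namespace DyckTiling

variable {n : ℕ}

theorem isCITiling_iff (T : DyckTiling n) :
    T.CoverInclusive ↔ IsCITiling n T.lower.ht T.upper.ht T.tiles := by
  constructor
  · intro H
    refine ⟨T.lower.isHt, T.upper.isHt, T.below, T.isDyck, fun t ht u hu c h1 h2 => ?_,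
      fun x z => ?_, fun t ht u hu x y z h1 h2 h3 a b h4 => ?_⟩
    · by_contra hne
      exact Finset.disjoint_left.1 (T.disj t ht u hu hne) h1 h2
    · rw [← mem_skewCells, ← T.cover]; simp
    · exact H t ht u hu ⟨_, h1, _, h2, rfl, h3⟩ _ h4
  · rintro H t ht u hu ⟨⟨x, z⟩, h1, ⟨x', y⟩, h2, h3, h4⟩ ⟨a, b⟩ h5
    simp only at h3 h4
    subst h3
    exact H.incl t ht u hu _ _ _ h1 h2 h4 a b h5

theorem ext_ht {T U : DyckTiling n} (h1 : ∀ x, T.lower.ht x = U.lower.ht x)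
    (h2 : ∀ x, T.upper.ht x = U.upper.ht x) (h3 : T.tiles = U.tiles) : T = U := by
  have e1 := DyckPath.ht_injective h1
  have e2 := DyckPath.ht_injective h2
  cases T; cases U
  simp only at e1 e2 h3
  subst e1 e2 h3
  rfl

theorem eq_of_order_zero (T U : DyckTiling 0) : T = U := by
  have h0 : ∀ (P : DyckPath 0) x, P.ht x = 0 := fun P x => by simp [DyckPath.ht]
  have ht : ∀ T : DyckTiling 0, T.tiles = ∅ := by
    intro T
    rw [Finset.eq_empty_iff_forall_notMem]
    intro t ht
    obtain ⟨a, b, f, hab, -, -, -, e⟩ := T.isDyck t ht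
    have h1 : (a, f a) ∈ T.tiles.biUnion id :=
      Finset.mem_biUnion.2 ⟨t, ht, by rw [id, e, mem_graph]; exact ⟨le_rfl, hab, rfl⟩⟩
    rw [T.cover, mem_skewCells, h0, h0] at h1
    omega
  exact ext_ht (by simp [h0]) (by simp [h0]) (by simp [ht])

end DyckTiling

namespace IsCITiling

variable {n : ℕ} {lo up : ℤ → ℤ} {ts : Finset (Finset (ℤ × ℤ))} {s : ℤ}

theorem exists_dyckTiling (H : IsCITiling n lo up ts) :
    ∃ T : DyckTiling n, T.lower.ht = lo ∧ T.upper.ht = up ∧ T.tiles = ts ∧ T.CoverInclusive := by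
  obtain ⟨P, hP⟩ := DyckPath.exists_of_isHt H.lo_isHt
  obtain ⟨Q, hQ⟩ := DyckPath.exists_of_isHt H.up_isHt
  obtain rfl := funext hP
  obtain rfl := funext hQ
  refine ⟨⟨P, Q, H.le, ts, H.dyck, fun t ht u hu hne => ?_, ?_⟩, rfl, rfl, rfl,
    (DyckTiling.isCITiling_iff _).2 H⟩
  · exact Finset.disjoint_left.2 fun c h1 h2 => hne (H.disj t ht u hu c h1 h2)
  · ext ⟨x, z⟩
    rw [mem_skewCells, ← H.mem]
    simp

theorem spread (H : IsCITiling n lo up ts) (hs : -n ≤ s) (hs' : s ≤ n) :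
    IsCITiling (n + 1) (spreadFun s lo) (spreadFun s up) (spreadTiles s ts) where
  lo_isHt := H.lo_isHt.spread hs hs'
  up_isHt := H.up_isHt.spread hs hs'
  le x := by
    unfold spreadFun
    have := H.le
    split_ifs
    · exact H.le _
    · simpa using H.le s
    · exact H.le _
  dyck t ht := by
    obtain ⟨u, hu, rfl⟩ := Finset.mem_image.1 ht
    exact (H.dyck u hu).spread s
  disj := by
    intro t ht u hu ⟨x, z⟩ h1 h2
    obtain ⟨t, ht', rfl⟩ := Finset.mem_image.1 ht
    obtain ⟨u, hu', rfl⟩ := Finset.mem_image.1 hu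
    congr 1
    rw [mem_spreadTile] at h1 h2
    rcases h1 with ⟨h1, h⟩ | ⟨h1, h⟩ | ⟨h1, h⟩ <;>
      rcases h2 with ⟨h2, h'⟩ | ⟨h2, h'⟩ | ⟨h2, h'⟩ <;>
      first | exact H.disj t ht' u hu' _ h h' | (exfalso; omega)
  mem x z := by
    simp only [spreadTiles, mem_image, exists_exists_and_eq_and, mem_spreadTile]
    rcases lt_trichotomy x s with hx | rfl | hx
    · have := H.mem (x + 1) z
      rw [spreadFun_of_lt hx, spreadFun_of_lt hx]
      simp only [hx, hx.ne, hx.not_gt, true_and, false_and, or_false, this]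
      push_cast
      omega
    · have := H.mem x (z - 1)
      rw [spreadFun_self, spreadFun_self]
      simp only [lt_irrefl, true_and, false_and, false_or, or_false, this]
      push_cast
      omega
    · have := H.mem (x - 1) z
      rw [spreadFun_of_gt hx, spreadFun_of_gt hx]
      simp only [hx, hx.ne', hx.not_gt, true_and, false_and, false_or, this]
      push_cast
      omega
  incl := by
    intro t ht u hu x y z h1 h2 hyz a b h3
    obtain ⟨t, ht', rfl⟩ := Finset.mem_image.1 ht
    obtain ⟨u, hu', rfl⟩ := Finset.mem_image.1 hu
    have key : ∀ a b, (a, b) ∈ t → ∃ c, (a, c) ∈ u := by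
      rw [mem_spreadTile] at h1 h2
      rcases h1 with ⟨h1, h⟩ | ⟨h1, h⟩ | ⟨h1, h⟩ <;>
        rcases h2 with ⟨h2, h'⟩ | ⟨h2, h'⟩ | ⟨h2, h'⟩ <;>
        first | exact H.incl t ht' u hu' _ _ _ h h' (by omega) | (exfalso; omega)
    rw [mem_spreadTile] at h3
    rcases h3 with ⟨h3, h⟩ | ⟨rfl, h⟩ | ⟨h3, h⟩
    · obtain ⟨c, hc⟩ := key _ _ h
      exact ⟨c, mem_spreadTile.2 (Or.inl ⟨h3, hc⟩)⟩
    · obtain ⟨c, hc⟩ := key _ _ h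
      exact ⟨c + 1, mem_spreadTile.2 (Or.inr (Or.inl ⟨rfl, by simpa using hc⟩))⟩
    · obtain ⟨c, hc⟩ := key _ _ h
      exact ⟨c, mem_spreadTile.2 (Or.inr (Or.inr ⟨h3, hc⟩))⟩

theorem of_spread {lo up : ℤ → ℤ} {ts : Finset (Finset (ℤ × ℤ))}
    (H : IsCITiling (n + 1) (spreadFun s lo) (spreadFun s up) (spreadTiles s ts))
    (hd : ∀ t ∈ ts, IsDyckTile t) : IsCITiling n lo up ts where
  lo_isHt := by
    simpa [contractFun_spreadFun] using H.lo_isHt.contract (peakAt_spreadFun s lo)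
  up_isHt := by
    simpa [contractFun_spreadFun] using H.up_isHt.contract (peakAt_spreadFun s up)
  le x := by
    rcases le_or_gt x s with hx | hx
    · simpa [spreadFun_of_lt (show x - 1 < s by omega)] using H.le (x - 1)
    · simpa [spreadFun_of_gt (show s < x + 1 by omega)] using H.le (x + 1)
  dyck := hd
  disj := by
    intro t ht u hu ⟨x, z⟩ h1 h2
    apply spreadTile_injective s
    rcases le_or_gt x s with hx | hx
    · exact H.disj _ (mem_image_of_mem _ ht) _ (mem_image_of_mem _ hu) (x - 1, z)
        (mem_spreadTile.2 (Or.inl ⟨by omega, by simpa using h1⟩))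
        (mem_spreadTile.2 (Or.inl ⟨by omega, by simpa using h2⟩))
    · exact H.disj _ (mem_image_of_mem _ ht) _ (mem_image_of_mem _ hu) (x + 1, z)
        (mem_spreadTile.2 (Or.inr (Or.inr ⟨by omega, by simpa using h1⟩)))
        (mem_spreadTile.2 (Or.inr (Or.inr ⟨by omega, by simpa using h2⟩)))
  mem x z := by
    rcases le_or_gt x s with hx | hx
    · have := H.mem (x - 1) z
      have h1 : x - 1 < s := by omega
      simp only [spreadTiles, mem_image, exists_exists_and_eq_and, mem_spreadTile,
        spreadFun_of_lt h1, h1, h1.ne, h1.not_gt, true_and, false_and, or_false,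
        sub_add_cancel] at this
      rw [this]
      push_cast
      omega
    · have := H.mem (x + 1) z
      have h1 : s < x + 1 := by omega
      simp only [spreadTiles, mem_image, exists_exists_and_eq_and, mem_spreadTile,
        spreadFun_of_gt h1, h1, h1.ne', h1.not_gt, true_and, false_and, false_or,
        add_sub_cancel_right] at this
      rw [this]
      push_cast
      omega
  incl := by
    intro t ht u hu x y z h1 h2 hyz a b h3
    have key : ∀ a b, (a, b) ∈ spreadTile s t → ∃ c, (a, c) ∈ spreadTile s u := by
      rcases le_or_gt x s with hx | hx
      · exact H.incl _ (mem_image_of_mem _ ht) _ (mem_image_of_mem _ hu) (x - 1) y z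
          (mem_spreadTile.2 (Or.inl ⟨by omega, by simpa using h1⟩))
          (mem_spreadTile.2 (Or.inl ⟨by omega, by simpa using h2⟩)) hyz
      · exact H.incl _ (mem_image_of_mem _ ht) _ (mem_image_of_mem _ hu) (x + 1) y z
          (mem_spreadTile.2 (Or.inr (Or.inr ⟨by omega, by simpa using h1⟩)))
          (mem_spreadTile.2 (Or.inr (Or.inr ⟨by omega, by simpa using h2⟩))) hyz
    rcases le_or_gt a s with ha | ha
    · obtain ⟨c, hc⟩ := key (a - 1) b (mem_spreadTile.2 (Or.inl ⟨by omega, by simpa using h3⟩))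
      have h1 : a - 1 < s := by omega
      simp only [mem_spreadTile, h1, h1.ne, h1.not_gt, true_and, false_and, or_false,
        sub_add_cancel] at hc
      exact ⟨c, hc⟩
    · obtain ⟨c, hc⟩ :=
        key (a + 1) b (mem_spreadTile.2 (Or.inr (Or.inr ⟨by omega, by simpa using h3⟩)))
      have h1 : s < a + 1 := by omega
      simp only [mem_spreadTile, h1, h1.ne', h1.not_gt, true_and, false_and, false_or,
        add_sub_cancel_right] at hc
      exact ⟨c, hc⟩

theorem exists_contract (H : IsCITiling (n + 1) lo up ts) (hlo : PeakAt s lo) (hup : PeakAt s up)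
    (hts : ∀ t ∈ ts, TilePeakAt s t) :
    ∃ ts', IsCITiling n (contractFun s lo) (contractFun s up) ts' ∧ spreadTiles s ts' = ts := by
  have e : spreadTiles s (ts.image (contractTile s)) = ts := by
    rw [spreadTiles, Finset.image_image]
    conv_rhs => rw [← Finset.image_id (s := ts)]
    exact Finset.image_congr fun t ht => spreadTile_contractTile (hts t ht)
  refine ⟨ts.image (contractTile s), of_spread (s := s) ?_ ?_, e⟩
  · rwa [e, spreadFun_contractFun hlo, spreadFun_contractFun hup]
  · intro t ht
    obtain ⟨u, hu, rfl⟩ := Finset.mem_image.1 ht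
    exact (H.dyck u hu).contract (hts u hu)

theorem cell_bounds (H : IsCITiling n lo up ts) {t : Finset (ℤ × ℤ)} (ht : t ∈ ts) {x z : ℤ}
    (h : (x, z) ∈ t) : lo x ≤ z ∧ z + 2 ≤ up x ∧ (z - x - n) % 2 = 0 :=
  (H.mem x z).1 ⟨t, ht, h⟩

theorem mem_neighbors_of_peak (H : IsCITiling n lo up ts) (hp : PeakAt s up)
    (hs : ({(s, up s - 2)} : Finset (ℤ × ℤ)) ∉ ts) (k : ℕ) :
    ∀ t ∈ ts, (s, up s - 2 - 2 * k) ∈ t →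
      (s - 1, up s - 3 - 2 * k) ∈ t ∧ (s + 1, up s - 3 - 2 * k) ∈ t := by
  obtain ⟨p1, p2⟩ := hp
  induction k with
  | zero =>
    intro t ht hst
    have hb := fun x z => H.cell_bounds (x := x) (z := z) ht
    obtain ⟨a, b, f, hab, hstep, hend, hmin, e⟩ := H.dyck t ht
    have hm : ∀ x z, (x, z) ∈ t ↔ a ≤ x ∧ x ≤ b ∧ z = f x := fun x z => by rw [e, mem_graph]
    simp only [hm] at hst hb ⊢
    obtain ⟨h1, h2, h3⟩ := hst
    have hl : a < s → f (s - 1) = f s - 1 := fun h => by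
      have h4 := hstep (s - 1) (by omega) (by omega)
      have h5 := hb (s - 1) _ ⟨by omega, by omega, rfl⟩
      rw [sub_add_cancel] at h4
      push_cast at h3
      omega
    have hr : s < b → f (s + 1) = f s - 1 := fun h => by
      have h4 := hstep s (by omega) (by omega)
      have h5 := hb (s + 1) _ ⟨by omega, by omega, rfl⟩
      push_cast at h3
      omega
    have hl' : a < s := by
      rcases eq_or_lt_of_le h1 with rfl | h
      · rcases eq_or_lt_of_le h2 with rfl | h'
        · exfalso
          apply hs
          convert ht
          rw [e]
          ext ⟨x, z⟩
          rw [mem_graph]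
          simp only [mem_singleton, Prod.mk.injEq]
          push_cast at h3
          constructor
          · rintro ⟨rfl, rfl⟩; omega
          · rintro ⟨h4, h5, rfl⟩
            obtain rfl : x = a := by omega
            omega
        · have := hmin (a + 1) (by omega) (by omega)
          have := hr h'
          omega
      · exact h
    have hr' : s < b := by
      rcases eq_or_lt_of_le h2 with rfl | h
      · have := hmin (s - 1) (by omega) (by omega)
        have := hl hl'
        omega
      · exact h
    have := hl hl'
    have := hr hr'
    push_cast at h3 ⊢
    omega
  | succ k ih =>
    intro t ht hst
    have hb := H.cell_bounds ht hst
    push_cast at hb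
    obtain ⟨u, hu, hsu⟩ := (H.mem s (up s - 2 - 2 * k)).2 (by omega)
    obtain ⟨i1, i2⟩ := ih u hu hsu
    have hne : t ≠ u := by
      rintro rfl
      obtain ⟨a, b, f, hab, hstep, hend, hmin, e⟩ := H.dyck t ht
      rw [e, mem_graph] at hst hsu
      push_cast at hst
      omega
    obtain ⟨c, hc⟩ := H.incl u hu t ht _ _ _ hsu hst (by push_cast; omega) _ _ i1
    obtain ⟨d, hd⟩ := H.incl u hu t ht _ _ _ hsu hst (by push_cast; omega) _ _ i2
    have hc1 : c ≠ up s - 3 - 2 * k := by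
      rintro rfl; exact hne (H.disj t ht u hu _ hc i1)
    have hd1 : d ≠ up s - 3 - 2 * k := by
      rintro rfl; exact hne (H.disj t ht u hu _ hd i2)
    have hm := hst
    obtain ⟨a, b, f, hab, hstep, hend, hmin, e⟩ := H.dyck t ht
    rw [e, mem_graph] at hst hc hd
    have h1 := hstep (s - 1) (by omega) (by omega)
    have h2 := hstep s (by omega) (by omega)
    rw [sub_add_cancel] at h1
    rw [e, mem_graph, mem_graph]
    push_cast at hst ⊢
    omega

theorem peaks (H : IsCITiling n lo up ts) (hp : PeakAt s up)
    (hs : ({(s, up s - 2)} : Finset (ℤ × ℤ)) ∉ ts) :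
    PeakAt s lo ∧ ∀ t ∈ ts, TilePeakAt s t := by
  have hpos := H.up_isHt.nonneg (s - 1)
  have hleft := H.up_isHt.left s
  have hright := H.up_isHt.right s
  have hr : -n < s ∧ s < n := by
    have := hp.1
    constructor
    · by_contra hc; have := hleft (by omega); omega
    · by_contra hc; have := hright (by omega); omega
  have hpar := H.up_isHt.parity (x := s) (by omega) (by omega)
  have hpar' := H.lo_isHt.parity (x := s) (by omega) (by omega)
  have key : ∀ t ∈ ts, ∀ z, (s, z + 1) ∈ t → (s - 1, z) ∈ t ∧ (s + 1, z) ∈ t := by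
    intro t ht z hz
    have hb := H.cell_bounds ht hz
    have hk := H.mem_neighbors_of_peak hp hs ((up s - 3 - z) / 2).toNat t ht
    have e : ((((up s - 3 - z) / 2).toNat : ℕ) : ℤ) = (up s - 3 - z) / 2 := by omega
    rw [e, show up s - 2 - 2 * ((up s - 3 - z) / 2) = z + 1 by omega,
      show up s - 3 - 2 * ((up s - 3 - z) / 2) = z by omega] at hk
    exact hk hz
  obtain ⟨p1, p2⟩ := hp
  have hlo : PeakAt s lo := by
    have g1 := H.le s
    have g2 := H.le (s - 1)
    have g3 := H.le (s + 1)
    have g4 := H.lo_isHt.step (s - 1) (by omega) (by omega)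
    have g5 := H.lo_isHt.step s (by omega) (by omega)
    rw [sub_add_cancel] at g4
    rcases eq_or_lt_of_le g1 with h | h
    · exact ⟨by omega, by omega⟩
    · obtain ⟨t, ht, hz⟩ := (H.mem s (lo s)).2 ⟨le_rfl, by omega, hpar'⟩
      obtain ⟨k1, k2⟩ := key t ht (lo s - 1) (by simpa using hz)
      have b1 := H.cell_bounds ht k1
      have b2 := H.cell_bounds ht k2
      exact ⟨by omega, by omega⟩
  obtain ⟨q1, q2⟩ := hlo
  refine ⟨⟨q1, q2⟩, fun t ht z => ⟨⟨fun h => ?_, fun h => (key t ht z h).1⟩,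
    ⟨fun h => ?_, fun h => (key t ht z h).2⟩⟩⟩
  · have hb := H.cell_bounds ht h
    obtain ⟨u, hu, hz⟩ := (H.mem s (z + 1)).2 (by omega)
    rwa [H.disj t ht u hu _ h (key u hu z hz).1]
  · have hb := H.cell_bounds ht h
    obtain ⟨u, hu, hz⟩ := (H.mem s (z + 1)).2 (by omega)
    rwa [H.disj t ht u hu _ h (key u hu z hz).2]

theorem top_notMem (H : IsCITiling n lo up ts) (x : ℤ) :
    ({(x, up x)} : Finset (ℤ × ℤ)) ∉ ts := fun h => by
  have := H.cell_bounds h (mem_singleton_self _)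
  omega

theorem addBoxes (H : IsCITiling n lo up ts) {up' : ℤ → ℤ} (H' : IsHt n up') (X : Finset ℤ)
    (hX : ∀ x, up' x = if x ∈ X then up x + 2 else up x) :
    IsCITiling n lo up' (ts ∪ X.image fun x => {(x, up x)}) where
  lo_isHt := H.lo_isHt
  up_isHt := H'
  le x := by
    have := H.le x
    rw [hX]
    split_ifs <;> omega
  dyck t ht := by
    rcases Finset.mem_union.1 ht with ht | ht
    · exact H.dyck t ht
    · obtain ⟨x, -, rfl⟩ := Finset.mem_image.1 ht
      exact isDyckTile_singleton _ _
  disj := by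
    intro t ht u hu ⟨x, z⟩ h1 h2
    rcases Finset.mem_union.1 ht with ht | ht <;> rcases Finset.mem_union.1 hu with hu | hu
    · exact H.disj t ht u hu _ h1 h2
    · obtain ⟨y, -, rfl⟩ := Finset.mem_image.1 hu
      have := H.cell_bounds ht h1
      grind
    · obtain ⟨y, -, rfl⟩ := Finset.mem_image.1 ht
      have := H.cell_bounds hu h2
      grind
    · obtain ⟨y, -, rfl⟩ := Finset.mem_image.1 ht
      obtain ⟨w, -, rfl⟩ := Finset.mem_image.1 hu
      grind
  mem x z := by
    have e : (∃ t ∈ ts ∪ X.image fun x => {(x, up x)}, (x, z) ∈ t) ↔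
        (∃ t ∈ ts, (x, z) ∈ t) ∨ (x ∈ X ∧ z = up x) := by
      simp only [mem_union, mem_image, or_and_right, exists_or]
      refine or_congr Iff.rfl ⟨?_, ?_⟩
      · rintro ⟨_, ⟨y, hy, rfl⟩, h⟩
        simp only [mem_singleton, Prod.mk.injEq] at h
        obtain ⟨rfl, rfl⟩ := h
        exact ⟨hy, rfl⟩
      · rintro ⟨hx, rfl⟩
        exact ⟨_, ⟨x, hx, rfl⟩, mem_singleton_self _⟩
    rw [e, H.mem, hX]
    split_ifs with hx
    · have h1 := H.le x
      have h2 := hX x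
      rw [if_pos hx] at h2
      have h3 := H.up_isHt.nonneg x
      have h4 : -n ≤ x := by
        by_contra hc; have := H'.left x (by omega); omega
      have h5 : x ≤ n := by
        by_contra hc; have := H'.right x (by omega); omega
      have h6 := H.up_isHt.parity h4 h5
      simp only [hx, true_and]
      omega
    · simp [hx]
  incl := by
    intro t ht u hu x y z h1 h2 hyz a b h3
    rcases Finset.mem_union.1 ht with ht | ht <;> rcases Finset.mem_union.1 hu with hu | hu
    · exact H.incl t ht u hu _ _ _ h1 h2 hyz a b h3
    · obtain ⟨w, -, rfl⟩ := Finset.mem_image.1 hu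
      have := H.cell_bounds ht h1
      grind
    · obtain ⟨w, -, rfl⟩ := Finset.mem_image.1 ht
      simp only [mem_singleton, Prod.mk.injEq] at h1 h3
      obtain ⟨rfl, rfl⟩ := h1
      obtain ⟨rfl, rfl⟩ := h3
      exact ⟨y, h2⟩
    · obtain ⟨w, -, rfl⟩ := Finset.mem_image.1 ht
      obtain ⟨v, -, rfl⟩ := Finset.mem_image.1 hu
      grind

theorem removeBoxes (H : IsCITiling n lo up ts) {up' : ℤ → ℤ} (H' : IsHt n up') (X : Finset ℤ)
    (hX : ∀ x, up' x = if x ∈ X then up x - 2 else up x)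
    (hts : ∀ x ∈ X, ({(x, up x - 2)} : Finset (ℤ × ℤ)) ∈ ts) :
    IsCITiling n lo up' (ts \ X.image fun x => {(x, up x - 2)}) where
  lo_isHt := H.lo_isHt
  up_isHt := H'
  le x := by
    rw [hX]
    split_ifs with hx
    · exact (H.cell_bounds (hts x hx) (mem_singleton_self _)).1
    · exact H.le x
  dyck t ht := H.dyck t (Finset.mem_sdiff.1 ht).1
  disj t ht u hu := H.disj t (Finset.mem_sdiff.1 ht).1 u (Finset.mem_sdiff.1 hu).1
  mem x z := by
    constructor
    · rintro ⟨t, ht, h⟩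
      obtain ⟨ht, hn⟩ := Finset.mem_sdiff.1 ht
      have h1 := H.cell_bounds ht h
      rw [hX]
      split_ifs with hx
      · have h2 := H.cell_bounds (hts x hx) (mem_singleton_self _)
        have h3 : z ≠ up x - 2 := by
          rintro rfl
          exact hn (Finset.mem_image.2
            ⟨x, hx, H.disj _ (hts x hx) t ht _ (mem_singleton_self _) h⟩)
        omega
      · exact h1
    · rintro ⟨h1, h2, h3⟩
      have h2' := h2
      rw [hX] at h2
      obtain ⟨t, ht, h⟩ := (H.mem x z).2 ⟨h1, by split_ifs at h2 <;> omega, h3⟩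
      refine ⟨t, Finset.mem_sdiff.2 ⟨ht, fun hc => ?_⟩, h⟩
      obtain ⟨y, hy, rfl⟩ := Finset.mem_image.1 hc
      simp only [mem_singleton, Prod.mk.injEq] at h
      obtain ⟨rfl, rfl⟩ := h
      rw [if_pos hy] at h2
      omega
  incl t ht u hu := H.incl t (Finset.mem_sdiff.1 ht).1 u (Finset.mem_sdiff.1 hu).1

end IsCITiling

theorem IsHt.bounds_of_up {m : ℕ} {h : ℤ → ℤ} {c : ℤ} (H : IsHt m h) (hc : h c = h (c - 1) + 1) :
    -m < c ∧ c < m := by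
  have h1 := H.nonneg (c - 1)
  constructor
  · by_contra hn; have := H.left c (by omega); omega
  · by_contra hn; have := H.right c (by omega); omega

theorem singleton_notMem_spreadTiles (s z : ℤ) (ts : Finset (Finset (ℤ × ℤ))) :
    ({(s, z)} : Finset (ℤ × ℤ)) ∉ spreadTiles s ts := by
  intro h
  obtain ⟨t, -, e⟩ := Finset.mem_image.1 h
  have h1 : (s, z) ∈ spreadTile s t := by rw [e]; exact mem_singleton_self _
  have h2 : (s, z - 1) ∈ t := by
    rcases mem_spreadTile.1 h1 with ⟨h, -⟩ | ⟨-, h⟩ | ⟨h, -⟩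
    · omega
    · exact h
    · omega
  have h3 : (s - 1, z - 1) ∈ spreadTile s t :=
    mem_spreadTile.2 (Or.inl ⟨by omega, by simpa using h2⟩)
  rw [e, mem_singleton, Prod.mk.injEq] at h3
  omega

theorem eligibleCol_spread (s : ℤ) (h : ℤ → ℤ) (ts : Finset (Finset (ℤ × ℤ))) :
    EligibleCol (spreadFun s h) (spreadTiles s ts) s :=
  ⟨by rw [(peakAt_spreadFun s h).1]; ring, singleton_notMem_spreadTiles _ _ _⟩

theorem exists_greatest_eligibleCol {m : ℕ} {h : ℤ → ℤ} (H : IsHt m h)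
    {ts : Finset (Finset (ℤ × ℤ))} (hc : ∃ c, EligibleCol h ts c) :
    ∃ Q, EligibleCol h ts Q ∧ ∀ c, EligibleCol h ts c → c ≤ Q :=
  Int.exists_greatest_of_bdd ⟨m, fun _ hz => (H.bounds_of_up hz.1).2.le⟩ hc

namespace IsCITiling

variable {n : ℕ} {lo up : ℤ → ℤ} {ts : Finset (Finset (ℤ × ℤ))} {s : ℤ}

theorem eligibleCol_first (H : IsCITiling (n + 1) lo up ts) : EligibleCol up ts (-n) := by
  have h1 := H.up_isHt.left (-n - 1) (by push_cast; omega)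
  have h2 := H.up_isHt.step (-n - 1) (by push_cast; omega) (by push_cast; omega)
  have h3 := H.up_isHt.nonneg (-n)
  rw [sub_add_cancel] at h2
  refine ⟨by omega, fun hc => ?_⟩
  have h4 := H.cell_bounds hc (mem_singleton_self _)
  have h5 := H.lo_isHt.nonneg (-n)
  omega

theorem exists_shrink (H : IsCITiling (n + 1) lo up ts) {up' : ℤ → ℤ} (H' : IsHt (n + 1) up')
    (X : Finset ℤ) (hX : ∀ x, up' x = if x ∈ X then up x - 2 else up x)
    (hts : ∀ x ∈ X, ({(x, up x - 2)} : Finset (ℤ × ℤ)) ∈ ts) (hp : PeakAt s up')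
    (hs : ({(s, up' s - 2)} : Finset (ℤ × ℤ)) ∉ ts) :
    ∃ T : DyckTiling n, T.CoverInclusive ∧ spreadFun s T.lower.ht = lo ∧
      spreadFun s T.upper.ht = up' ∧
      spreadTiles s T.tiles = ts \ X.image fun x => {(x, up x - 2)} := by
  have H1 := H.removeBoxes H' X hX hts
  obtain ⟨p1, p2⟩ := H1.peaks hp fun h => hs (Finset.mem_sdiff.1 h).1
  obtain ⟨us, H2, e⟩ := H1.exists_contract p1 hp p2
  obtain ⟨T, h1, h2, h3, h4⟩ := H2.exists_dyckTiling
  exact ⟨T, h4, by rw [h1, spreadFun_contractFun p1], by rw [h2, spreadFun_contractFun hp],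
    by rw [h3, e]⟩

end IsCITiling

theorem isHt_stripGrow {m : ℕ} {s : ℤ} {h h' : ℤ → ℤ} (H : IsHt m h) (hp : PeakAt s h)
    (e : ∀ x, h' x = if s ≤ x ∧ h (x + 1) = h x + 1 then h x + 2 else h x) : IsHt m h' := by
  obtain ⟨p1, p2⟩ := hp
  obtain ⟨b1, b2⟩ := H.bounds_of_up (c := s) (by omega)
  refine ⟨fun x hx => ?_, fun x hx => ?_, fun x hx hx' => ?_, fun x => ?_⟩
  · rw [e, if_neg (by omega), H.left x hx]
  · rw [e, H.right x hx, H.right (x + 1) (by omega)]; simp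
  · have h1 := H.step x hx hx'
    have h2 : x + 1 < m → h (x + 1 + 1) = h (x + 1) + 1 ∨ h (x + 1 + 1) = h (x + 1) - 1 :=
      H.step (x + 1) (by omega)
    rw [e, e]
    rcases eq_or_ne (x + 1) s with rfl | hs
    · rw [if_neg (by omega), if_neg (by omega)]; exact h1
    · split_ifs <;> omega
  · have := H.nonneg x
    rw [e]
    split_ifs <;> omega

theorem isHt_ribbonGrow {m : ℕ} {s Q : ℤ} {h h' : ℤ → ℤ} (H : IsHt m h) (hp : PeakAt s h)
    (hQ : h Q = h (Q - 1) + 1)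
    (e : ∀ x, h' x = if s < x ∧ x < Q then h x + 2 else h x) : IsHt m h' := by
  obtain ⟨p1, p2⟩ := hp
  obtain ⟨b1, b2⟩ := H.bounds_of_up (c := s) (by omega)
  obtain ⟨b3, b4⟩ := H.bounds_of_up hQ
  refine ⟨fun x hx => ?_, fun x hx => ?_, fun x hx hx' => ?_, fun x => ?_⟩
  · rw [e, if_neg (by omega), H.left x hx]
  · rw [e, if_neg (by omega), H.right x hx]
  · have h1 := H.step x hx hx'
    rw [e, e]
    rcases eq_or_ne x s with rfl | h2
    · split_ifs <;> omega
    rcases eq_or_ne (x + 1) Q with rfl | h3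
    · rw [add_sub_cancel_right] at hQ
      split_ifs <;> omega
    · split_ifs <;> omega
  · have := H.nonneg x
    rw [e]
    split_ifs <;> omega

/-- A growth procedure for cover-inclusive Dyck tilings that is invertible by means of the
special column. -/
structure IsGrowth (G : ∀ n : ℕ, DyckTiling n → ℤ → DyckTiling (n + 1) → Prop) : Prop where
  exists_grow : ∀ {n : ℕ} {T : DyckTiling n} {s : ℤ}, T.CoverInclusive → -n ≤ s → s ≤ n →
    ∃ T', G n T s T'
  unique : ∀ {n : ℕ} {T : DyckTiling n} {s : ℤ} {T' T'' : DyckTiling (n + 1)},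
    G n T s T' → G n T s T'' → T' = T''
  lower : ∀ {n : ℕ} {T : DyckTiling n} {s : ℤ} {T' : DyckTiling (n + 1)},
    G n T s T' → T'.lower.ht = spreadFun s T.lower.ht
  coverInclusive : ∀ {n : ℕ} {T : DyckTiling n} {s : ℤ} {T' : DyckTiling (n + 1)},
    T.CoverInclusive → -n ≤ s → s ≤ n → G n T s T' → T'.CoverInclusive
  specialCol : ∀ {n : ℕ} {T : DyckTiling n} {s : ℤ} {T' : DyckTiling (n + 1)},
    T.CoverInclusive → -n ≤ s → s ≤ n → G n T s T' → SpecialCol T' s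
  cancel : ∀ {n : ℕ} {T U : DyckTiling n} {s : ℤ} {T' : DyckTiling (n + 1)},
    T.CoverInclusive → U.CoverInclusive → -n ≤ s → s ≤ n → G n T s T' → G n U s T' → T = U
  exists_shrink : ∀ {n : ℕ} {T' : DyckTiling (n + 1)}, T'.CoverInclusive →
    ∃ (T : DyckTiling n) (s : ℤ), T.CoverInclusive ∧ -n ≤ s ∧ s ≤ n ∧ G n T s T'

theorem DyckTiling.CoverInclusive.isCITiling {n : ℕ} {T : DyckTiling n} (h : T.CoverInclusive) :
    IsCITiling n T.lower.ht T.upper.ht T.tiles := T.isCITiling_iff.1 h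

theorem DyckTiling.CoverInclusive.spread {n : ℕ} {T : DyckTiling n} {s : ℤ}
    (h : T.CoverInclusive) (hs : -n ≤ s) (hs' : s ≤ n) :
    IsCITiling (n + 1) (spreadFun s T.lower.ht) (spreadFun s T.upper.ht) (spreadTiles s T.tiles) :=
  h.isCITiling.spread hs hs'

/-- Two tilings that grow into the same tiling by adding the same boxes to their spreads at `s`
are equal. -/
theorem DyckTiling.eq_of_spread {n : ℕ} {T U : DyckTiling n} {s : ℤ} (hT : T.CoverInclusive)
    (hU : U.CoverInclusive) (hs : -n ≤ s) (hs' : s ≤ n)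
    (h1 : spreadFun s T.lower.ht = spreadFun s U.lower.ht)
    (h2 : spreadFun s T.upper.ht = spreadFun s U.upper.ht) (X : Finset ℤ)
    (h3 : (spreadTiles s T.tiles ∪ X.image fun x => {(x, spreadFun s T.upper.ht x)}) =
      spreadTiles s U.tiles ∪ X.image fun x => {(x, spreadFun s U.upper.ht x)}) : T = U := by
  have disj : ∀ V : DyckTiling n, V.CoverInclusive → Disjoint (spreadTiles s V.tiles)
      (X.image fun x => {(x, spreadFun s V.upper.ht x)}) := by
    intro V hV
    rw [Finset.disjoint_right]
    intro t ht
    obtain ⟨x, -, rfl⟩ := Finset.mem_image.1 ht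
    exact (hV.spread hs hs').top_notMem x
  refine DyckTiling.ext_ht (congrFun (spreadFun_injective s h1))
    (congrFun (spreadFun_injective s h2)) (spreadTiles_injective s ?_)
  have dT := disj T hT
  have dU := disj U hU
  rw [h2] at dT h3
  rw [← Finset.union_sdiff_cancel_right dT, h3, Finset.union_sdiff_cancel_right dU]

section strip

/-- The columns of the boxes that the strip-grow map adds to a spread tiling with upper
boundary `h`. -/
def stripCols (n : ℕ) (s : ℤ) (h : ℤ → ℤ) : Finset ℤ :=
  (Finset.Icc s (n : ℤ)).filter fun x => h (x + 1) = h x + 1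

variable {n : ℕ} {T : DyckTiling n} {s : ℤ} {T' : DyckTiling (n + 1)}

theorem mem_stripCols {h : ℤ → ℤ} (H : IsHt (n + 1) h) {x : ℤ} :
    x ∈ stripCols n s h ↔ s ≤ x ∧ h (x + 1) = h x + 1 := by
  simp only [stripCols, mem_filter, mem_Icc]
  constructor
  · rintro ⟨⟨h1, -⟩, h2⟩; exact ⟨h1, h2⟩
  · rintro ⟨h1, h2⟩
    have := H.bounds_of_up (c := x + 1) (by simpa using h2)
    push_cast at this
    exact ⟨⟨h1, by omega⟩, h2⟩

theorem stripGrowRel_iff : StripGrowRel T s T' ↔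
    (∀ x, T'.lower.ht x = spreadFun s T.lower.ht x) ∧
    (∀ x, T'.upper.ht x =
      if s ≤ x ∧ spreadFun s T.upper.ht (x + 1) = spreadFun s T.upper.ht x + 1 then
        spreadFun s T.upper.ht x + 2 else spreadFun s T.upper.ht x) ∧
    T'.tiles = spreadTiles s T.tiles ∪ (stripCols n s (spreadFun s T.upper.ht)).image
      fun x => {(x, spreadFun s T.upper.ht x)} := Iff.rfl

/-- The upper boundary of a tiling is recovered from that of its strip-growth. -/
theorem upper_eq_of_stripGrow (hs : -n ≤ s) (h : ∀ x, T'.upper.ht x =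
      if s ≤ x ∧ spreadFun s T.upper.ht (x + 1) = spreadFun s T.upper.ht x + 1 then
        spreadFun s T.upper.ht x + 2 else spreadFun s T.upper.ht x) (x : ℤ) :
    T.upper.ht x = if x < s then T'.upper.ht (x - 1) else
      if x < n then T'.upper.ht x - 1 else 0 := by
  split_ifs with hx hx'
  · rw [h, if_neg (by omega), spreadFun_of_lt (by omega), sub_add_cancel]
  · have h4 := T.upper.isHt.step (x - 1)
    rw [sub_add_cancel] at h4
    rw [h, spreadFun_of_gt (show s < x + 1 by omega), add_sub_cancel_right]
    rcases eq_or_ne x s with rfl | h5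
    · rw [spreadFun_self, if_neg (by omega)]; ring
    · rw [spreadFun_of_gt (show s < x by omega)]
      have := h4 (by omega) (by omega)
      split_ifs <;> omega
  · exact T.upper.isHt.right x (by omega)

theorem isHt_stripShrink {m : ℕ} {lo up up' : ℤ → ℤ} {ts : Finset (Finset (ℤ × ℤ))}
    (H : IsCITiling m lo up ts) (hs : up s = up (s - 1) + 1)
    (hts : ∀ x, s < x → up x = up (x - 1) + 1 → ({(x, up x - 2)} : Finset (ℤ × ℤ)) ∈ ts)
    (e : ∀ x, up' x = if s < x ∧ up x = up (x - 1) + 1 then up x - 2 else up x) :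
    IsHt m up' ∧ PeakAt s up' := by
  obtain ⟨b1, b2⟩ := H.up_isHt.bounds_of_up hs
  refine ⟨⟨fun x hx => ?_, fun x hx => ?_, fun x hx hx' => ?_, fun x => ?_⟩, ?_, ?_⟩
  · rw [e, if_neg (by omega), H.up_isHt.left x hx]
  · have := H.up_isHt.nonneg (x - 1)
    have := H.up_isHt.right x hx
    rw [e, if_neg (by omega), this]
  · have h1 := H.up_isHt.step x hx hx'
    have h2 : s ≤ x - 1 → up x = up (x - 1) + 1 ∨ up x = up (x - 1) - 1 := fun h => by
      simpa using H.up_isHt.step (x - 1) (by omega) (by omega)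
    rw [e, e, add_sub_cancel_right]
    split_ifs <;> omega
  · have h1 := H.up_isHt.nonneg x
    rw [e]
    split_ifs with h
    · have h2 := H.cell_bounds (hts x h.1 h.2) (mem_singleton_self _)
      have h3 := H.lo_isHt.nonneg x
      omega
    · exact h1
  · rw [e, e, if_neg (by omega), if_neg (by omega)]; omega
  · have h1 := H.up_isHt.step s (by omega) (by omega)
    rw [e, e, add_sub_cancel_right]
    split_ifs <;> omega

theorem isGrowth_stripGrow : IsGrowth fun _ T s T' => StripGrowRel T s T' where
  exists_grow {n T s} hT hs hs' := by
    have H := hT.spread hs hs'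
    have H' := isHt_stripGrow H.up_isHt (peakAt_spreadFun s _) fun _ => rfl
    obtain ⟨T', h1, h2, h3, -⟩ := (H.addBoxes H'
        (stripCols n s (spreadFun s T.upper.ht)) fun x => by
      simp only [mem_stripCols H.up_isHt]).exists_dyckTiling
    exact ⟨T', congrFun h1, congrFun h2, h3⟩
  unique := by
    rintro n T s T' T'' ⟨h1, h2, h3⟩ ⟨h1', h2', h3'⟩
    exact DyckTiling.ext_ht (fun x => by rw [h1, h1']) (fun x => by rw [h2, h2']) (by rw [h3, h3'])
  lower h := funext h.1
  coverInclusive := by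
    intro n T s T' hT hs hs' h
    obtain ⟨h1, h2, h3⟩ := stripGrowRel_iff.1 h
    have H := hT.spread hs hs'
    have := H.addBoxes T'.upper.isHt (stripCols n s (spreadFun s T.upper.ht)) fun x => by
      simp only [h2, mem_stripCols H.up_isHt]
    rw [DyckTiling.isCITiling_iff, funext h1, h3]
    exact this
  specialCol := by
    intro n T s T' hT hs hs' h
    obtain ⟨-, h2, h3⟩ := stripGrowRel_iff.1 h
    have H := hT.spread hs hs'
    obtain ⟨p1, p2⟩ := peakAt_spreadFun s T.upper.ht
    have e1 : T'.upper.ht s = spreadFun s T.upper.ht s := by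
      rw [h2, if_neg (by omega)]
    have e2 : T'.upper.ht (s - 1) = spreadFun s T.upper.ht (s - 1) := by
      rw [h2, if_neg (by omega)]
    refine ⟨⟨by omega, ?_⟩, fun c hc => ?_⟩
    · rw [h3, Finset.mem_union, not_or]
      refine ⟨singleton_notMem_spreadTiles _ _ _, fun h => ?_⟩
      obtain ⟨x, hx, h⟩ := Finset.mem_image.1 h
      rw [mem_stripCols H.up_isHt] at hx
      simp only [singleton_inj, Prod.mk.injEq] at h
      obtain ⟨rfl, -⟩ := h
      omega
    · by_contra hn
      obtain ⟨hc1, hc2⟩ := hc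
      have g1 := h2 c
      have g2 := h2 (c - 1)
      rw [sub_add_cancel] at g2
      by_cases hcu : spreadFun s T.upper.ht (c + 1) = spreadFun s T.upper.ht c + 1
      · rw [if_pos ⟨by omega, hcu⟩] at g1
        apply hc2
        rw [h3]
        refine Finset.mem_union_right _ (Finset.mem_image.2
          ⟨c, (mem_stripCols H.up_isHt).2 ⟨by omega, hcu⟩, ?_⟩)
        rw [g1, add_sub_cancel_right]
      · rw [if_neg (by omega)] at g1
        split_ifs at g2 <;> omega
  cancel := by
    intro n T U s T' hT hU hs hs' h h'
    obtain ⟨h1, h2, h3⟩ := stripGrowRel_iff.1 h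
    obtain ⟨h1', h2', h3'⟩ := stripGrowRel_iff.1 h'
    have e : T.upper.ht = U.upper.ht := by
      funext x
      rw [upper_eq_of_stripGrow hs h2, upper_eq_of_stripGrow hs h2']
    refine DyckTiling.eq_of_spread hT hU hs hs' (by rw [← funext h1, ← funext h1'])
      (by rw [e]) (stripCols n s (spreadFun s U.upper.ht)) (Eq.trans ?_ (h3.symm.trans h3'))
    rw [e]
  exists_shrink := by
    intro n T' hT'
    have H := hT'.isCITiling
    obtain ⟨s, ⟨hs1, hs2⟩, hmax⟩ :=
      exists_greatest_eligibleCol H.up_isHt ⟨_, H.eligibleCol_first⟩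
    have hts : ∀ x, s < x → T'.upper.ht x = T'.upper.ht (x - 1) + 1 →
        ({(x, T'.upper.ht x - 2)} : Finset (ℤ × ℤ)) ∈ T'.tiles := fun x h1 h2 => by
      by_contra hc
      exact absurd (hmax x ⟨h2, hc⟩) (by omega)
    let up' : ℤ → ℤ := fun x => if s < x ∧ T'.upper.ht x = T'.upper.ht (x - 1) + 1 then
      T'.upper.ht x - 2 else T'.upper.ht x
    have hup' : ∀ x, up' x = if s < x ∧ T'.upper.ht x = T'.upper.ht (x - 1) + 1 then
      T'.upper.ht x - 2 else T'.upper.ht x := fun _ => rfl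
    clear_value up'
    obtain ⟨H', hp⟩ := isHt_stripShrink H hs1 hts hup'
    obtain ⟨b1, b2⟩ := H'.peak_bounds hp
    have hs' : up' s = T'.upper.ht s := by rw [hup', if_neg (by omega)]
    have hgrow : ∀ x, s ≤ x ∧ up' (x + 1) = up' x + 1 ↔
        s < x ∧ T'.upper.ht x = T'.upper.ht (x - 1) + 1 := by
      intro x
      rcases lt_trichotomy x s with hx | rfl | hx
      · omega
      · have := hp.2; omega
      · rcases lt_or_ge x (n + 1) with hx' | hx'
        · have h1 := T'.upper.isHt.step x (by push_cast; omega) (by push_cast; omega)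
          have h2 := T'.upper.isHt.step (x - 1) (by push_cast; omega) (by push_cast; omega)
          rw [sub_add_cancel] at h2
          rw [hup', hup', add_sub_cancel_right]
          split_ifs <;> omega
        · have h1 := T'.upper.isHt.right x (by push_cast; omega)
          have h2 := T'.upper.isHt.nonneg (x - 1)
          have h3 := H'.right x (by push_cast; omega)
          have h4 := H'.right (x + 1) (by push_cast; omega)
          omega
    have hmem : ∀ x, x ∈ stripCols n s up' ↔
        s < x ∧ T'.upper.ht x = T'.upper.ht (x - 1) + 1 := fun x => by
      rw [mem_stripCols H', hgrow]
    obtain ⟨T, hT, e1, e2, e3⟩ := H.exists_shrink H' (stripCols n s up')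
      (fun x => by rw [hup']; simp only [hmem])
      (fun x hx => hts x ((hmem x).1 hx).1 ((hmem x).1 hx).2) hp (by rwa [hs'])
    refine ⟨T, s, hT, b1, b2, stripGrowRel_iff.2 ⟨fun x => by rw [e1], fun x => ?_, ?_⟩⟩
    · rw [e2]
      simp only [hgrow]
      rw [hup']
      split_ifs <;> omega
    · have e4 : ((stripCols n s up').image fun x => ({(x, up' x)} : Finset (ℤ × ℤ))) =
          (stripCols n s up').image fun x => {(x, T'.upper.ht x - 2)} :=
        Finset.image_congr fun x hx => by rw [hup', if_pos ((hmem x).1 hx)]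
      rw [e2, e3, e4, Finset.sdiff_union_of_subset]
      intro t ht
      obtain ⟨x, hx, rfl⟩ := Finset.mem_image.1 ht
      exact hts x ((hmem x).1 hx).1 ((hmem x).1 hx).2

end strip

section ribbon

variable {n : ℕ} {T : DyckTiling n} {s : ℤ} {T' : DyckTiling (n + 1)}

/-- `RibbonGrowRel` for a given special column `Q` of the spread tiling. -/
structure RibbonGrowAt (T : DyckTiling n) (s : ℤ) (T' : DyckTiling (n + 1)) (Q : ℤ) : Prop where
  lower : ∀ x, T'.lower.ht x = spreadFun s T.lower.ht x
  eligible : EligibleCol (spreadFun s T.upper.ht) (spreadTiles s T.tiles) Q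
  max : ∀ c, EligibleCol (spreadFun s T.upper.ht) (spreadTiles s T.tiles) c → c ≤ Q
  upper : ∀ x, T'.upper.ht x =
    if s < x ∧ x < Q then spreadFun s T.upper.ht x + 2 else spreadFun s T.upper.ht x
  tiles : T'.tiles = spreadTiles s T.tiles ∪
    (Finset.Ioo s Q).image fun x => {(x, spreadFun s T.upper.ht x)}

theorem ribbonGrowRel_iff : RibbonGrowRel T s T' ↔ ∃ Q, RibbonGrowAt T s T' Q :=
  ⟨fun ⟨h1, Q, h2, h3, h4, h5⟩ => ⟨Q, h1, h2, h3, h4, h5⟩,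
    fun ⟨Q, h1, h2, h3, h4, h5⟩ => ⟨h1, Q, h2, h3, h4, h5⟩⟩

namespace RibbonGrowAt

variable {Q : ℤ}

theorem le (h : RibbonGrowAt T s T' Q) : s ≤ Q := h.max s (eligibleCol_spread s _ _)

theorem ne_succ (h : RibbonGrowAt T s T' Q) : Q ≠ s + 1 := by
  rintro rfl
  have h1 := h.eligible.1
  have h2 := (peakAt_spreadFun s T.upper.ht).2
  rw [add_sub_cancel_right] at h1
  omega

theorem upper_succ (h : RibbonGrowAt T s T' Q) (hQ : s < Q) :
    T'.upper.ht (s + 1) = T'.upper.ht s + 1 := by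
  have h1 := h.ne_succ
  have h2 := (peakAt_spreadFun s T.upper.ht).2
  rw [h.upper, h.upper, if_pos (by omega), if_neg (by omega), h2]
  ring

theorem upper_succ_of_eq (h : RibbonGrowAt T s T' s) : T'.upper.ht (s + 1) = T'.upper.ht s - 1 := by
  have h2 := (peakAt_spreadFun s T.upper.ht).2
  rw [h.upper, h.upper, if_neg (by omega), if_neg (by omega), h2]

theorem singleton_mem_iff (h : RibbonGrowAt T s T' Q) {x : ℤ} (hx : x ≤ s ∨ Q ≤ x) (z : ℤ) :
    ({(x, z)} : Finset (ℤ × ℤ)) ∈ T'.tiles ↔ {(x, z)} ∈ spreadTiles s T.tiles := by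
  rw [h.tiles, Finset.mem_union, or_iff_left]
  intro hm
  obtain ⟨y, hy, e⟩ := Finset.mem_image.1 hm
  simp only [singleton_inj, Prod.mk.injEq] at e
  rw [mem_Ioo] at hy
  omega

theorem singleton_mem (h : RibbonGrowAt T s T' Q) {x : ℤ} (hx : s < x) (hx' : x < Q) :
    ({(x, T'.upper.ht x - 2)} : Finset (ℤ × ℤ)) ∈ T'.tiles := by
  rw [h.tiles]
  refine Finset.mem_union_right _ (Finset.mem_image.2 ⟨x, mem_Ioo.2 ⟨hx, hx'⟩, ?_⟩)
  rw [h.upper, if_pos ⟨hx, hx'⟩, add_sub_cancel_right]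

theorem singleton_notMem (h : RibbonGrowAt T s T' Q) :
    ({(Q, T'.upper.ht Q - 2)} : Finset (ℤ × ℤ)) ∉ T'.tiles := by
  rw [h.singleton_mem_iff (Or.inr le_rfl), h.upper, if_neg (by omega)]
  exact h.eligible.2

theorem not_lt {U : DyckTiling n} {R : ℤ} (h : RibbonGrowAt T s T' Q) (h' : RibbonGrowAt U s T' R) :
    ¬ Q < R := by
  intro hlt
  have h1 := h'.upper_succ (h.le.trans_lt hlt)
  rcases eq_or_lt_of_le h.le with rfl | h2
  · have := h.upper_succ_of_eq
    omega
  · exact h.singleton_notMem (h'.singleton_mem h2 hlt)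

theorem specialCol (h : RibbonGrowAt T s T' Q) : SpecialCol T' s := by
  obtain ⟨p1, p2⟩ := peakAt_spreadFun s T.upper.ht
  refine ⟨⟨?_, ?_⟩, fun c hc => ?_⟩
  · rw [h.upper, h.upper, if_neg (by omega), if_neg (by omega)]; omega
  · rw [h.singleton_mem_iff (Or.inl le_rfl)]
    exact singleton_notMem_spreadTiles _ _ _
  · by_contra hn
    obtain ⟨hc1, hc2⟩ := hc
    have h1 := h.le
    have h2 := h.ne_succ
    rcases lt_trichotomy c Q with h3 | rfl | h3
    · exact hc2 (h.singleton_mem (by omega) h3)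
    · have h4 := h.eligible.1
      rw [h.upper, h.upper, if_neg (by omega), if_pos (by omega)] at hc1
      omega
    · rw [h.singleton_mem_iff (Or.inr h3.le)] at hc2
      rw [h.upper, if_neg (by omega)] at hc1 hc2
      rw [h.upper, if_neg (by omega)] at hc1
      exact absurd (h.max c ⟨hc1, hc2⟩) (by omega)

end RibbonGrowAt

/-- The run of one-box tiles at the top of the columns following the special column `s`: it ends
before a column `Q` where the upper boundary steps down. -/
theorem exists_ribbon {m : ℕ} {lo up : ℤ → ℤ} {ts : Finset (Finset (ℤ × ℤ))}
    (H : IsCITiling m lo up ts) (hs : EligibleCol up ts s)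
    (hmax : ∀ c, EligibleCol up ts c → c ≤ s) :
    ∃ Q : ℤ, (∀ x, s < x → x < Q → ({(x, up x - 2)} : Finset (ℤ × ℤ)) ∈ ts) ∧
      ({(Q, up Q - 2)} : Finset (ℤ × ℤ)) ∉ ts ∧ Q ≤ m ∧
      ((Q = s ∧ up (s + 1) = up s - 1) ∨
        (s + 1 < Q ∧ up (s + 1) = up s + 1 ∧ up Q = up (Q - 1) - 1)) := by
  obtain ⟨b1, b2⟩ := H.up_isHt.bounds_of_up hs.1
  have hm : ({((m : ℤ), up m - 2)} : Finset (ℤ × ℤ)) ∉ ts := fun h => by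
    have h1 := H.cell_bounds h (mem_singleton_self _)
    have h2 := H.up_isHt.right m le_rfl
    have h3 := H.lo_isHt.nonneg m
    omega
  obtain ⟨r, ⟨hr1, hr2⟩, hr3⟩ := Int.exists_least_of_bdd
    (P := fun r : ℤ => s < r ∧ ({(r, up r - 2)} : Finset (ℤ × ℤ)) ∉ ts)
    ⟨s, fun z hz => hz.1.le⟩ ⟨m, b2, hm⟩
  have hrm := hr3 m ⟨b2, hm⟩
  have hrun : ∀ x, s < x → x < r → ({(x, up x - 2)} : Finset (ℤ × ℤ)) ∈ ts := fun x h1 h2 => by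
    by_contra hc
    exact absurd (hr3 x ⟨h1, hc⟩) (by omega)
  have hr4 : up r = up (r - 1) - 1 := by
    have h1 := H.up_isHt.step (r - 1) (by omega) (by omega)
    rw [sub_add_cancel] at h1
    refine h1.resolve_left fun h => ?_
    exact absurd (hmax r ⟨h, hr2⟩) (by omega)
  rcases eq_or_lt_of_le (show s + 1 ≤ r by omega) with rfl | hr5
  · exact ⟨s, fun x h1 h2 => by omega, hs.2, b2.le, Or.inl ⟨rfl, by simpa using hr4⟩⟩
  · refine ⟨r, hrun, hr2, hrm, Or.inr ⟨hr5, ?_, hr4⟩⟩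
    refine (H.up_isHt.step s b1.le b2).resolve_right fun h => ?_
    have hp : PeakAt s up := ⟨by have := hs.1; omega, h⟩
    have h1 := ((H.peaks hp hs.2).2 _ (hrun (s + 1) (by omega) hr5) (up (s + 1) - 2)).2.1
      (mem_singleton_self _)
    rw [mem_singleton, Prod.mk.injEq] at h1
    omega

theorem isHt_ribbonShrink {m : ℕ} {Q : ℤ} {lo up up' : ℤ → ℤ} {ts : Finset (Finset (ℤ × ℤ))}
    (H : IsCITiling m lo up ts) (hs : up s = up (s - 1) + 1)
    (hts : ∀ x, s < x → x < Q → ({(x, up x - 2)} : Finset (ℤ × ℤ)) ∈ ts) (hm : Q ≤ m)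
    (hQ : (Q = s ∧ up (s + 1) = up s - 1) ∨
      (s + 1 < Q ∧ up (s + 1) = up s + 1 ∧ up Q = up (Q - 1) - 1))
    (e : ∀ x, up' x = if s < x ∧ x < Q then up x - 2 else up x) :
    IsHt m up' ∧ PeakAt s up' := by
  obtain ⟨b1, b2⟩ := H.up_isHt.bounds_of_up hs
  refine ⟨⟨fun x hx => ?_, fun x hx => ?_, fun x hx hx' => ?_, fun x => ?_⟩, ?_, ?_⟩
  · rw [e, if_neg (by omega), H.up_isHt.left x hx]
  · rw [e, if_neg (by omega), H.up_isHt.right x hx]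
  · have h1 := H.up_isHt.step x hx hx'
    rw [e, e]
    rcases eq_or_ne x s with rfl | h2
    · split_ifs <;> omega
    rcases eq_or_ne (x + 1) Q with rfl | h3
    · rw [add_sub_cancel_right] at hQ
      split_ifs <;> omega
    · split_ifs <;> omega
  · have h1 := H.up_isHt.nonneg x
    rw [e]
    split_ifs with h
    · have h2 := H.cell_bounds (hts x h.1 h.2) (mem_singleton_self _)
      have h3 := H.lo_isHt.nonneg x
      omega
    · exact h1
  · rw [e, e, if_neg (by omega), if_neg (by omega)]; omega
  · rw [e, e]
    split_ifs <;> omega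

theorem isGrowth_ribbonGrow : IsGrowth fun _ T s T' => RibbonGrowRel T s T' where
  exists_grow {n T s} hT hs hs' := by
    have H := hT.spread hs hs'
    obtain ⟨Q, hQ, hmax⟩ :=
      exists_greatest_eligibleCol H.up_isHt ⟨s, eligibleCol_spread s T.upper.ht T.tiles⟩
    have H' := isHt_ribbonGrow H.up_isHt (peakAt_spreadFun s _) hQ.1 fun _ => rfl
    obtain ⟨T', h1, h2, h3, -⟩ := (H.addBoxes H' (Finset.Ioo s Q) fun x => by
      simp only [mem_Ioo]).exists_dyckTiling
    exact ⟨T', ribbonGrowRel_iff.2 ⟨Q, congrFun h1, hQ, hmax, congrFun h2, h3⟩⟩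
  unique := by
    intro n T s T' T'' h h'
    obtain ⟨Q, h⟩ := ribbonGrowRel_iff.1 h
    obtain ⟨R, h'⟩ := ribbonGrowRel_iff.1 h'
    obtain rfl : Q = R := le_antisymm (h'.max Q h.eligible) (h.max R h'.eligible)
    exact DyckTiling.ext_ht (fun x => by rw [h.lower, h'.lower])
      (fun x => by rw [h.upper, h'.upper]) (by rw [h.tiles, h'.tiles])
  lower h := funext h.1
  coverInclusive := by
    intro n T s T' hT hs hs' h
    obtain ⟨Q, h⟩ := ribbonGrowRel_iff.1 h
    have := (hT.spread hs hs').addBoxes T'.upper.isHt (Finset.Ioo s Q) fun x => by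
      simp only [h.upper, mem_Ioo]
    rw [DyckTiling.isCITiling_iff, funext h.lower, h.tiles]
    exact this
  specialCol := by
    intro n T s T' hT hs hs' h
    obtain ⟨Q, h⟩ := ribbonGrowRel_iff.1 h
    exact h.specialCol
  cancel := by
    intro n T U s T' hT hU hs hs' h h'
    obtain ⟨Q, h⟩ := ribbonGrowRel_iff.1 h
    obtain ⟨R, h'⟩ := ribbonGrowRel_iff.1 h'
    obtain rfl : Q = R := le_antisymm (not_lt.1 (h'.not_lt h)) (not_lt.1 (h.not_lt h'))
    refine DyckTiling.eq_of_spread hT hU hs hs' (by rw [← funext h.lower, ← funext h'.lower]) ?_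
      (Finset.Ioo s Q) (h.tiles.symm.trans h'.tiles)
    funext x
    have h1 := h.upper x
    have h2 := h'.upper x
    split_ifs at h1 h2 <;> omega
  exists_shrink := by
    intro n T' hT'
    have H := hT'.isCITiling
    obtain ⟨s, hs, hmax⟩ := exists_greatest_eligibleCol H.up_isHt ⟨_, H.eligibleCol_first⟩
    obtain ⟨Q, hrun, hQn, hQm, hQ⟩ := exists_ribbon H hs hmax
    let up' : ℤ → ℤ := fun x => if s < x ∧ x < Q then T'.upper.ht x - 2 else T'.upper.ht x
    have hup' : ∀ x, up' x = if s < x ∧ x < Q then T'.upper.ht x - 2 else T'.upper.ht x :=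
      fun _ => rfl
    clear_value up'
    obtain ⟨H', hp⟩ := isHt_ribbonShrink H hs.1 hrun hQm hQ hup'
    obtain ⟨b1, b2⟩ := H'.peak_bounds hp
    have hs' : up' s = T'.upper.ht s := by rw [hup', if_neg (by omega)]
    have hrun' : ∀ x ∈ Finset.Ioo s Q,
        ({(x, T'.upper.ht x - 2)} : Finset (ℤ × ℤ)) ∈ T'.tiles := fun x hx =>
      hrun x (mem_Ioo.1 hx).1 (mem_Ioo.1 hx).2
    obtain ⟨T, hT, e1, e2, e3⟩ := H.exists_shrink H' (Finset.Ioo s Q)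
      (fun x => by rw [hup']; simp only [mem_Ioo]) hrun' hp (by rw [hs']; exact hs.2)
    refine ⟨T, s, hT, b1, b2, ribbonGrowRel_iff.2
      ⟨Q, fun x => by rw [e1], ?_, fun c hc => ?_, fun x => ?_, ?_⟩⟩
    · rw [e2, e3]
      have hQ' : up' Q = T'.upper.ht Q := by rw [hup', if_neg (by omega)]
      refine ⟨?_, fun h => hQn ?_⟩
      · rcases hQ with ⟨rfl, -⟩ | ⟨h1, -, h2⟩
        · rw [hp.1]; ring
        · rw [hQ', h2, hup', if_pos (by omega)]; ring
      · rw [← hQ']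
        exact (Finset.mem_sdiff.1 h).1
    · rw [e2, e3] at hc
      obtain ⟨hc1, hc2⟩ := hc
      by_contra hn
      have g1 : up' c = T'.upper.ht c := by rw [hup', if_neg (by omega)]
      have g2 : up' (c - 1) = T'.upper.ht (c - 1) := by rw [hup', if_neg (by omega)]
      rw [g1, g2] at hc1
      rw [g1] at hc2
      refine absurd (hmax c ⟨hc1, fun h => hc2 (Finset.mem_sdiff.2 ⟨h, fun hm => ?_⟩)⟩) (by omega)
      obtain ⟨y, hy, e⟩ := Finset.mem_image.1 hm
      simp only [singleton_inj, Prod.mk.injEq] at e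
      rw [mem_Ioo] at hy
      omega
    · rw [e2, hup']
      split_ifs <;> omega
    · have e4 : ((Finset.Ioo s Q).image fun x => ({(x, up' x)} : Finset (ℤ × ℤ))) =
          (Finset.Ioo s Q).image fun x => {(x, T'.upper.ht x - 2)} :=
        Finset.image_congr fun x hx => by rw [hup', if_pos (mem_Ioo.1 hx)]
      rw [e2, e3, e4, Finset.sdiff_union_of_subset]
      intro t ht
      obtain ⟨x, hx, rfl⟩ := Finset.mem_image.1 ht
      exact hrun' x hx

end ribbon

section chords

variable {n : ℕ} {P : DyckPath n}

theorem DyckPath.pt_succ (P : DyckPath n) {k : ℕ} (hk : k < 2 * n) :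
    P.pt (k + 1) = P.pt k + if P.step ⟨k, hk⟩ = true then 1 else -1 := by
  have h := P.ht_step ⟨k, hk⟩
  simp only at h
  rw [DyckPath.pt, DyckPath.pt, ← h]
  congr 1
  push_cast
  ring

theorem DyckPath.step_eq_true_iff (P : DyckPath n) {k : ℕ} (hk : k < 2 * n) :
    P.step ⟨k, hk⟩ = true ↔ P.pt k < P.pt (k + 1) := by
  rw [P.pt_succ hk]
  split_ifs with h <;> simp [h]

theorem DyckPath.step_eq_false_iff (P : DyckPath n) {k : ℕ} (hk : k < 2 * n) :
    P.step ⟨k, hk⟩ = false ↔ P.pt (k + 1) < P.pt k := by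
  rw [P.pt_succ hk]
  split_ifs with h <;> simp [h]

theorem isChord_iff {p q : ℕ} : IsChord P p q ↔ p < q ∧ q < 2 * n ∧ P.pt (q + 1) = P.pt p ∧
    ∀ m : ℕ, p < m → m ≤ q → P.pt p < P.pt m := by
  constructor
  · rintro ⟨h1, h2, -, -, h3, h4⟩
    exact ⟨h1, h2, h3, h4⟩
  · rintro ⟨h1, h2, h3, h4⟩
    refine ⟨h1, h2, ⟨by omega, ?_⟩, ⟨h2, ?_⟩, h3, h4⟩
    · exact (P.step_eq_true_iff _).2 (h4 _ (by omega) (by omega))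
    · exact (P.step_eq_false_iff _).2 (h3 ▸ h4 _ h1 le_rfl)

namespace IsChord

variable {a b c d : ℕ}

theorem nested (h : IsChord P a b) (h' : IsChord P c d) (hac : a < c) (hcb : c ≤ b) : d < b := by
  rw [isChord_iff] at h h'
  obtain ⟨h1, h2, h3, h4⟩ := h
  obtain ⟨h1', h2', h3', h4'⟩ := h'
  have e := h4 c hac hcb
  by_contra hbd
  rcases eq_or_lt_of_le (not_lt.1 hbd) with rfl | hlt
  · omega
  · have := h4' (b + 1) (by omega) (by omega)
    omega

theorem right_unique (h : IsChord P a b) (h' : IsChord P a d) : b = d := by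
  have key : ∀ {b d : ℕ}, IsChord P a b → IsChord P a d → ¬ b < d := by
    intro b d h h' hbd
    rw [isChord_iff] at h h'
    have := h'.2.2.2 (b + 1) (by omega) (by omega)
    omega
  have := key h h'
  have := key h' h
  omega

theorem left_unique (h : IsChord P a b) (h' : IsChord P c b) : a = c := by
  rcases lt_trichotomy a c with hac | hac | hac
  · exact absurd (h.nested h' hac h'.1.le) (lt_irrefl _)
  · exact hac
  · exact absurd (h'.nested h hac h.1.le) (lt_irrefl _)

theorem step_left (h : IsChord P a b) (ha : a < 2 * n) : P.step ⟨a, ha⟩ = true := by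
  obtain ⟨-, -, ⟨_, h⟩, -⟩ := h
  exact h

theorem step_right (h : IsChord P a b) (hb : b < 2 * n) : P.step ⟨b, hb⟩ = false := by
  obtain ⟨-, -, -, ⟨_, h⟩, -⟩ := h
  exact h

theorem right_ne_left (h : IsChord P a b) (h' : IsChord P c d) : b ≠ c := by
  rintro rfl
  have := h.step_right h.2.1
  rw [h'.step_left] at this
  cases this

end IsChord

namespace ChordLabeling

variable (C : ChordLabeling P)

theorem r_injective : Function.Injective C.r := fun i j h =>
  C.inj ((C.chord i).left_unique (h ▸ C.chord j))

variable {C} in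
theorem ext_l {D : ChordLabeling P} (h : C.l = D.l) : C = D := by
  have hr : C.r = D.r := by
    funext i
    have := C.chord i
    rw [h] at this
    exact this.right_unique (D.chord i)
  cases C
  cases D
  simp only at h hr
  subst h hr
  rfl

theorem image_of_injective {f : Fin n → ℕ} (hf : Function.Injective f) {b : Bool}
    (hb : ∀ i, ∃ h : f i < 2 * n, P.step ⟨f i, h⟩ = b) :
    univ.image f = (univ.filter fun i : Fin (2 * n) => P.step i = b).map Fin.valEmbedding := by
  refine Finset.eq_of_subset_of_card_le ?_ ?_
  · intro k hk
    obtain ⟨i, -, rfl⟩ := mem_image.1 hk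
    obtain ⟨h, h'⟩ := hb i
    exact mem_map.2 ⟨⟨f i, h⟩, by simpa using h', rfl⟩
  · rw [card_map, card_image_of_injective _ hf, card_univ, Fintype.card_fin]
    have h1 := stepCount_add P.step (2 * n) le_rfl
    rw [stepCount_all, stepCount_all, P.balanced] at h1
    cases b
    · omega
    · exact P.balanced.le

theorem card_filter_lt {f : Fin n → ℕ} (hf : Function.Injective f) {b : Bool}
    (hb : ∀ i, ∃ h : f i < 2 * n, P.step ⟨f i, h⟩ = b) (k : ℕ) :
    (univ.filter fun j => f j < k).card = stepCount P.step b k := by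
  rw [stepCount, ← card_image_of_injective _ hf,
    ← card_map (Fin.valEmbedding) (s := filter _ _)]
  congr 1
  have h := image_of_injective hf hb
  ext m
  have hm := Finset.ext_iff.1 h m
  simp only [mem_image, mem_univ, true_and, mem_map, mem_filter, Fin.valEmbedding_apply] at hm ⊢
  constructor
  · rintro ⟨i, h1, rfl⟩
    obtain ⟨j, h2, h3⟩ := hm.1 ⟨i, rfl⟩
    exact ⟨j, ⟨h3 ▸ h1, h2⟩, h3⟩
  · rintro ⟨j, ⟨h1, h2⟩, h3⟩
    obtain ⟨i, rfl⟩ := hm.2 ⟨j, h2, h3⟩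
    exact ⟨i, h3 ▸ h1, rfl⟩

theorem exists_l_eq {k : ℕ} (hk : k < 2 * n) (h : P.step ⟨k, hk⟩ = true) : ∃ i, C.l i = k := by
  have := Finset.ext_iff.1 (image_of_injective C.inj (fun i => (C.chord i).2.2.1)) k
  simp only [mem_image, mem_univ, true_and, mem_map, mem_filter, Fin.valEmbedding_apply] at this
  exact this.2 ⟨_, h, rfl⟩

end ChordLabeling

theorem seqOf_le (C : ChordLabeling P) (i : Fin n) : seqOf C i ≤ 2 * i := by
  have h : ∀ q : Fin n → Prop, ∀ _ : DecidablePred q,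
      (univ.filter fun j : Fin n => j < i ∧ q j).card ≤ i := by
    intro q _
    refine (card_le_card (t := Finset.Iio i) ?_).trans (by simp)
    intro j hj
    simp only [mem_filter, mem_univ, true_and] at hj
    simpa using hj.1
  have h1 := h (fun j => C.l j < C.l i) inferInstance
  have h2 := h (fun j => C.r j < C.l i) inferInstance
  unfold seqOf
  omega

end chords

section insertion

/-- Relabeling of step positions when a peak is inserted before step `p`. -/
def shiftPos (p a : ℕ) : ℕ := if a < p then a else a + 2

/-- Relabeling of step positions when the peak at steps `p` and `p + 1` is deleted. -/
def unshiftPos (p a : ℕ) : ℕ := if a < p then a else a - 2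

theorem shiftPos_strictMono (p : ℕ) : StrictMono (shiftPos p) := by
  intro a b h
  unfold shiftPos
  split_ifs <;> omega

theorem shiftPos_unshiftPos {p a : ℕ} (h : a ≠ p) (h' : a ≠ p + 1) :
    shiftPos p (unshiftPos p a) = a := by
  unfold shiftPos unshiftPos
  split_ifs <;> omega

variable {n p : ℕ} {P' : DyckPath n} {P : DyckPath (n + 1)}

theorem pt_of_le (hP : P.ht = spreadFun ((p : ℤ) - n) P'.ht) {k : ℕ} (hk : k ≤ p) :
    P.pt k = P'.pt k := by
  rw [DyckPath.pt, DyckPath.pt, hP, spreadFun_of_lt (by push_cast; omega)]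
  congr 1
  push_cast
  ring

theorem pt_peak (hP : P.ht = spreadFun ((p : ℤ) - n) P'.ht) : P.pt (p + 1) = P'.pt p + 1 := by
  rw [DyckPath.pt, DyckPath.pt, hP, ← spreadFun_self]
  congr 1
  push_cast
  ring

theorem pt_add_two (hP : P.ht = spreadFun ((p : ℤ) - n) P'.ht) {k : ℕ} (hk : p ≤ k) :
    P.pt (k + 2) = P'.pt k := by
  rw [DyckPath.pt, DyckPath.pt, hP, spreadFun_of_gt (by push_cast; omega)]
  congr 1
  push_cast
  ring

theorem isChord_peak (hP : P.ht = spreadFun ((p : ℤ) - n) P'.ht) (hp : p ≤ 2 * n) :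
    IsChord P p (p + 1) := by
  have h0 := pt_of_le hP le_rfl
  have h1 := pt_peak hP
  have h2 := pt_add_two hP le_rfl
  rw [isChord_iff]
  refine ⟨by omega, by omega, by rw [show p + 1 + 1 = p + 2 from rfl]; omega, fun m h h' => ?_⟩
  obtain rfl : m = p + 1 := by omega
  omega

theorem isChord_shiftPos (hP : P.ht = spreadFun ((p : ℤ) - n) P'.ht) (hp : p ≤ 2 * n) {a b : ℕ} :
    IsChord P (shiftPos p a) (shiftPos p b) ↔ IsChord P' a b := by
  have hsh : ∀ a, (a < p → shiftPos p a = a) ∧ (p ≤ a → shiftPos p a = a + 2) := fun a =>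
    ⟨fun h => by simp [shiftPos, h], fun h => by simp [shiftPos, h.not_gt]⟩
  have hl : ∀ a, P.pt (shiftPos p a) = P'.pt a := by
    intro a
    rcases lt_or_ge a p with h | h
    · rw [(hsh a).1 h, pt_of_le hP h.le]
    · rw [(hsh a).2 h, pt_add_two hP h]
  have hr : ∀ b, P.pt (shiftPos p b + 1) = P'.pt (b + 1) := by
    intro b
    rcases lt_or_ge b p with h | h
    · rw [(hsh b).1 h, pt_of_le hP h]
    · rw [(hsh b).2 h, show b + 2 + 1 = b + 1 + 2 from rfl, pt_add_two hP (by omega)]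
  have ha := hsh a
  have hb := hsh b
  rw [isChord_iff, isChord_iff, (shiftPos_strictMono p).lt_iff_lt, hl, hr]
  have hlt : shiftPos p b < 2 * (n + 1) ↔ b < 2 * n := by omega
  rw [hlt]
  refine and_congr_right fun hab => and_congr_right fun _ => and_congr_right fun _ => ?_
  constructor
  · intro h m h1 h2
    rcases le_or_gt m p with hm | hm
    · have := h m (by omega) (by omega)
      rwa [pt_of_le hP hm] at this
    · have := h (m + 2) (by omega) (by omega)
      rwa [pt_add_two hP hm.le] at this
  · intro h m h1 h2
    rcases lt_trichotomy m (p + 1) with hm | rfl | hm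
    · rw [pt_of_le hP (by omega)]
      exact h m (by omega) (by omega)
    · rw [pt_peak hP]
      have := h p (by omega) (by omega)
      omega
    · obtain ⟨k, rfl⟩ : ∃ k, m = k + 2 := ⟨m - 2, by omega⟩
      rw [pt_add_two hP (by omega)]
      exact h k (by omega) (by omega)

theorem seqOf_castSucc {C' : ChordLabeling P'} {C : ChordLabeling P}
    (hl : ∀ i, C.l i.castSucc = shiftPos p (C'.l i))
    (hr : ∀ i, C.r i.castSucc = shiftPos p (C'.r i)) (i : Fin n) :
    seqOf C i.castSucc = seqOf C' i := by
  have key : ∀ (q : Fin (n + 1) → Prop) (_ : DecidablePred q) (q' : Fin n → Prop)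
      (_ : DecidablePred q'), (∀ j, q j.castSucc ↔ q' j) →
      (univ.filter fun j => j < i.castSucc ∧ q j).card =
        (univ.filter fun j => j < i ∧ q' j).card := by
    intro q _ q' _ h
    refine Eq.trans (congrArg card ?_) (card_map Fin.castSuccEmb)
    ext j
    simp only [mem_filter, mem_univ, true_and, mem_map, Fin.coe_castSuccEmb]
    constructor
    · rintro ⟨h1, h2⟩
      obtain ⟨j, rfl⟩ := Fin.exists_castSucc_eq.2 (h1.trans_le (Fin.le_last _)).ne
      exact ⟨j, ⟨by simpa using h1, (h j).1 h2⟩, rfl⟩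
    · rintro ⟨j, ⟨h1, h2⟩, rfl⟩
      exact ⟨by simpa using h1, (h j).2 h2⟩
  unfold seqOf
  congr 1
  · exact key _ _ _ _ fun j => by rw [hl, hl, (shiftPos_strictMono p).lt_iff_lt]
  · exact key _ _ _ _ fun j => by rw [hl, hr, (shiftPos_strictMono p).lt_iff_lt]

theorem seqOf_last (C : ChordLabeling P) : seqOf C (Fin.last n) = C.l (Fin.last n) := by
  have h1 := ChordLabeling.card_filter_lt C.inj (fun i => (C.chord i).2.2.1) (C.l (Fin.last n))
  have h2 := ChordLabeling.card_filter_lt C.r_injective (fun i => (C.chord i).2.2.2.1)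
    (C.l (Fin.last n))
  have h3 := stepCount_add P.step (C.l (Fin.last n))
    ((C.chord (Fin.last n)).1.trans (C.chord (Fin.last n)).2.1).le
  rw [← h1, ← h2] at h3
  refine Eq.trans (congrArg₂ (· + ·) (congrArg card ?_) (congrArg card ?_)) h3
  · ext j
    simp only [mem_filter, mem_univ, true_and, and_iff_right_iff_imp]
    intro h
    exact Fin.lt_last_iff_ne_last.2 (by rintro rfl; omega)
  · ext j
    simp only [mem_filter, mem_univ, true_and, and_iff_right_iff_imp]
    intro h
    refine Fin.lt_last_iff_ne_last.2 ?_
    rintro rfl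
    have := (C.chord (Fin.last n)).1
    omega

theorem ChordLabeling.r_last (C : ChordLabeling P) :
    C.r (Fin.last n) = C.l (Fin.last n) + 1 := by
  have hc := C.chord (Fin.last n)
  obtain ⟨h1, h2, h3, h4⟩ := isChord_iff.1 hc
  by_contra hne
  have hlt : C.l (Fin.last n) + 1 < C.r (Fin.last n) := by omega
  have hk : C.l (Fin.last n) + 1 < 2 * (n + 1) := by omega
  have e1 := P.pt_succ (k := C.l (Fin.last n)) (by omega)
  rw [if_pos (hc.step_left _)] at e1
  have e2 := P.pt_succ hk
  have e3 := h4 (C.l (Fin.last n) + 1 + 1) (by omega) (by omega)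
  have hs : P.step ⟨C.l (Fin.last n) + 1, hk⟩ = true := by
    by_contra hs
    rw [if_neg hs] at e2
    omega
  obtain ⟨j, hj⟩ := C.exists_l_eq hk hs
  have := C.natural j (Fin.last n) (by omega) (hc.nested (C.chord j) (by omega) (by omega))
  exact absurd this (Fin.le_last j).not_gt

theorem ChordLabeling.exists_remove_last (C : ChordLabeling P) :
    ∃ (P' : DyckPath n) (C' : ChordLabeling P'),
      P.ht = spreadFun ((C.l (Fin.last n) : ℤ) - n) P'.ht ∧
      (∀ i, seqOf C i.castSucc = seqOf C' i) ∧
      ∀ i, C.l i.castSucc = shiftPos (C.l (Fin.last n)) (C'.l i) := by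
  set p := C.l (Fin.last n) with hp
  have hc := C.chord (Fin.last n)
  rw [C.r_last, ← hp] at hc
  obtain ⟨h1, h2, h3, h4⟩ := isChord_iff.1 hc
  have e1 := P.pt_succ (k := p) (by omega)
  rw [if_pos (hc.step_left _)] at e1
  have hpk : PeakAt ((p : ℤ) - n) P.ht := by
    have a0 : P.pt p = P.ht ((p : ℤ) - n - 1) := by
      rw [DyckPath.pt]; congr 1; push_cast; ring
    have a1 : P.pt (p + 1) = P.ht ((p : ℤ) - n) := by
      rw [DyckPath.pt]; congr 1; push_cast; ring
    have a2 : P.pt (p + 1 + 1) = P.ht ((p : ℤ) - n + 1) := by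
      rw [DyckPath.pt]; congr 1; push_cast; ring
    rw [a0, a1] at e1
    rw [a2, a0] at h3
    exact ⟨by omega, by omega⟩
  obtain ⟨P', hP'⟩ := DyckPath.exists_of_isHt (P.isHt.contract hpk)
  have hP : P.ht = spreadFun ((p : ℤ) - n) P'.ht := by
    rw [funext hP', spreadFun_contractFun hpk]
  have hp2 : p ≤ 2 * n := by omega
  have hl : ∀ i : Fin n, shiftPos p (unshiftPos p (C.l i.castSucc)) = C.l i.castSucc := by
    intro i
    refine shiftPos_unshiftPos (fun h => ?_) fun h => ?_
    · exact (Fin.castSucc_lt_last i).ne (C.inj (h.trans hp))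
    · exact hc.right_ne_left (C.chord i.castSucc) h.symm
  have hr : ∀ i : Fin n, shiftPos p (unshiftPos p (C.r i.castSucc)) = C.r i.castSucc := by
    intro i
    refine shiftPos_unshiftPos (fun h => ?_) fun h => ?_
    · exact (C.chord i.castSucc).right_ne_left hc h
    · exact (Fin.castSucc_lt_last i).ne (C.r_injective (h.trans C.r_last.symm))
  let C' : ChordLabeling P' :=
    { l := fun i => unshiftPos p (C.l i.castSucc)
      r := fun i => unshiftPos p (C.r i.castSucc)
      chord := fun i => by
        rw [← isChord_shiftPos hP hp2, hl, hr]
        exact C.chord _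
      inj := fun i j h => by
        have h : unshiftPos p (C.l i.castSucc) = unshiftPos p (C.l j.castSucc) := h
        have := congrArg (shiftPos p) h
        rw [hl, hl] at this
        exact Fin.castSucc_injective _ (C.inj this)
      natural := fun i j h h' => by
        rw [← (shiftPos_strictMono p).lt_iff_lt, hl, hl] at h
        rw [← (shiftPos_strictMono p).lt_iff_lt, hr, hr] at h'
        simpa using C.natural _ _ h h' }
  exact ⟨P', C', hP, seqOf_castSucc (fun i => (hl i).symm) (fun i => (hr i).symm),
    fun i => (hl i).symm⟩

theorem ChordLabeling.exists_insert (C' : ChordLabeling P') (hp : p ≤ 2 * n)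
    (hP : P.ht = spreadFun ((p : ℤ) - n) P'.ht) :
    ∃ C : ChordLabeling P, (∀ i, seqOf C i.castSucc = seqOf C' i) ∧ seqOf C (Fin.last n) = p := by
  have hpk := isChord_peak hP hp
  have hne : ∀ a, shiftPos p a ≠ p ∧ shiftPos p a ≠ p + 1 := by
    intro a
    unfold shiftPos
    split_ifs <;> omega
  let C : ChordLabeling P :=
    { l := Fin.snoc (α := fun _ => ℕ) (fun i => shiftPos p (C'.l i)) p
      r := Fin.snoc (α := fun _ => ℕ) (fun i => shiftPos p (C'.r i)) (p + 1)
      chord := fun i => by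
        induction i using Fin.lastCases with
        | last => simpa using hpk
        | cast i => simpa using (isChord_shiftPos hP hp).2 (C'.chord i)
      inj := fun i j h => by
        induction i using Fin.lastCases with
        | last =>
          induction j using Fin.lastCases with
          | last => rfl
          | cast j =>
            simp only [Fin.snoc_last, Fin.snoc_castSucc] at h
            exact absurd h.symm (hne _).1
        | cast i =>
          induction j using Fin.lastCases with
          | last =>
            simp only [Fin.snoc_last, Fin.snoc_castSucc] at h
            exact absurd h (hne _).1
          | cast j =>
            simp only [Fin.snoc_castSucc] at h
            rw [C'.inj ((shiftPos_strictMono p).injective h)]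
      natural := fun i j h h' => by
        induction j using Fin.lastCases with
        | last =>
          induction i using Fin.lastCases with
          | last => exact absurd h (lt_irrefl _)
          | cast i =>
            simp only [Fin.snoc_last, Fin.snoc_castSucc] at h h'
            have := shiftPos_strictMono p (C'.chord i).1
            omega
        | cast j =>
          induction i using Fin.lastCases with
          | last => exact Fin.castSucc_lt_last j
          | cast i =>
            simp only [Fin.snoc_castSucc, (shiftPos_strictMono p).lt_iff_lt] at h h'
            exact Fin.castSucc_lt_castSucc_iff.2 (C'.natural _ _ h h') }
  refine ⟨C, seqOf_castSucc (p := p) (fun i => by simp [C]) (fun i => by simp [C]), ?_⟩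
  rw [seqOf_last]
  simp [C]

end insertion

theorem ChordLabeling.eq_of_seqOf_eq {n : ℕ} {P : DyckPath n} {C D : ChordLabeling P}
    (h : seqOf C = seqOf D) : C = D := by
  induction n with
  | zero => exact ext_l (Subsingleton.elim _ _)
  | succ n ih =>
    obtain ⟨P₁, C₁, hP₁, hs₁, hl₁⟩ := C.exists_remove_last
    obtain ⟨P₂, C₂, hP₂, hs₂, hl₂⟩ := D.exists_remove_last
    have hlast : C.l (Fin.last n) = D.l (Fin.last n) := by
      rw [← seqOf_last, ← seqOf_last, h]
    rw [hlast] at hP₁ hl₁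
    obtain rfl : P₁ = P₂ :=
      DyckPath.ht_injective (congrFun (spreadFun_injective _ (hP₁.symm.trans hP₂)))
    obtain rfl : C₁ = C₂ := ih (funext fun i => by rw [← hs₁, ← hs₂, h])
    refine ext_l (funext fun i => ?_)
    induction i using Fin.lastCases with
    | last => exact hlast
    | cast i => rw [hl₁, hl₂]

section standardization

variable {n : ℕ}

theorem exists_isStandardization {w : Fin n → ℕ} (hw : Function.Injective w) :
    ∃ σ, IsStandardization w σ := by
  have hm : StrictMono (w ∘ Tuple.sort w) :=
    (Tuple.monotone_sort w).strictMono_of_injective (hw.comp (Tuple.sort w).injective)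
  refine ⟨(Tuple.sort w)⁻¹, fun i j => ?_⟩
  rw [← hm.lt_iff_lt]
  simp

theorem IsStandardization.strictMono {w : Fin n → ℕ} {σ : Equiv.Perm (Fin n)}
    (h : IsStandardization w σ) : StrictMono (w ∘ σ.symm) := by
  intro i j hij
  exact (h _ _).1 (by simpa using hij)

theorem IsStandardization.unique {w : Fin n → ℕ} {σ τ : Equiv.Perm (Fin n)}
    (hσ : IsStandardization w σ) (hτ : IsStandardization w τ) : σ = τ := by
  have h : w ∘ σ.symm = w ∘ τ.symm := by
    refine (StrictMono.range_inj hσ.strictMono hτ.strictMono).1 ?_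
    rw [Set.range_comp, Set.range_comp]
    simp
  have hw : Function.Injective w := by
    have := hσ.strictMono.injective
    simpa using this
  have : σ.symm = τ.symm := Equiv.ext fun i => hw (congrFun h i)
  simpa using congrArg Equiv.symm this

theorem ChordLabeling.eq_of_isStandardization {P : DyckPath n} {C D : ChordLabeling P}
    {σ : Equiv.Perm (Fin n)} (hC : IsStandardization C.l σ) (hD : IsStandardization D.l σ) :
    C = D := by
  have h : C.l ∘ σ.symm = D.l ∘ σ.symm := by
    refine (StrictMono.range_inj hC.strictMono hD.strictMono).1 ?_
    have := (image_of_injective C.inj (fun i => (C.chord i).2.2.1)).trans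
      (image_of_injective D.inj (fun i => (D.chord i).2.2.1)).symm
    rw [Set.range_comp, Set.range_comp]
    simpa using congrArg (fun s : Finset ℕ => (s : Set ℕ)) this
  refine ext_l (funext fun i => ?_)
  simpa using congrFun h (σ i)

end standardization

/-- `GrowSeq G n p T`: the tiling `T` is obtained from the empty tiling by growing with `G`
successively at the columns `p i - i`. -/
inductive GrowSeq (G : ∀ n : ℕ, DyckTiling n → ℤ → DyckTiling (n + 1) → Prop) :
    (n : ℕ) → (Fin n → ℕ) → DyckTiling n → Prop where
  | nil (p : Fin 0 → ℕ) (T : DyckTiling 0) : GrowSeq G 0 p T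
  | cons (n : ℕ) (p : Fin (n + 1) → ℕ) (T : DyckTiling n) (T' : DyckTiling (n + 1)) :
      GrowSeq G n (fun i => p i.castSucc) T →
      G n T ((p (Fin.last n) : ℤ) - n) T' → GrowSeq G (n + 1) p T'

theorem isDTS_iff_growSeq {n : ℕ} {p : Fin n → ℕ} {T : DyckTiling n} :
    IsDTS n p T ↔ GrowSeq (fun _ T s T' => StripGrowRel T s T') n p T := by
  constructor
  · intro h
    induction h with
    | nil p T => exact .nil p T
    | cons n p T T' _ h ih => exact .cons n p T T' ih h
  · intro h
    induction h with
    | nil p T => exact .nil p T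
    | cons n p T T' _ h ih => exact .cons n p T T' ih h

theorem isDTR_iff_growSeq {n : ℕ} {p : Fin n → ℕ} {T : DyckTiling n} :
    IsDTR n p T ↔ GrowSeq (fun _ T s T' => RibbonGrowRel T s T') n p T := by
  constructor
  · intro h
    induction h with
    | nil p T => exact .nil p T
    | cons n p T T' _ h ih => exact .cons n p T T' ih h
  · intro h
    induction h with
    | nil p T => exact .nil p T
    | cons n p T T' _ h ih => exact .cons n p T T' ih h

theorem DyckTiling.coverInclusive_of_order_zero (T : DyckTiling 0) : T.CoverInclusive := by
  have hempty : ∀ t ∈ T.tiles, ∀ c, c ∉ t := by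
    intro t ht c hc
    have h1 : c ∈ T.tiles.biUnion id := mem_biUnion.2 ⟨t, ht, hc⟩
    rw [T.cover, skewCells] at h1
    simp only [mem_filter] at h1
    have := T.upper.isHt.le_order c.1
    have := T.lower.isHt.nonneg c.1
    push_cast at *
    omega
  intro t ht u _ ⟨c, hc, _⟩
  exact absurd hc (hempty t ht c)

namespace IsGrowth

variable {G : ∀ n : ℕ, DyckTiling n → ℤ → DyckTiling (n + 1) → Prop}

variable {n : ℕ} {p q : Fin n → ℕ} {T U : DyckTiling n}

theorem coverInclusive_of_growSeq (hG : IsGrowth G) (hp : ∀ i, p i ≤ 2 * i) (h : GrowSeq G n p T) :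
    T.CoverInclusive := by
  induction h with
  | nil p T => exact T.coverInclusive_of_order_zero
  | cons n p T T' _ h ih =>
    have hlast := hp (Fin.last n)
    rw [Fin.val_last] at hlast
    exact hG.coverInclusive (ih fun i => hp i.castSucc) (by omega) (by omega) h

theorem exists_growSeq (hG : IsGrowth G) (hp : ∀ i, p i ≤ 2 * i) : ∃ T, GrowSeq G n p T := by
  induction n with
  | zero =>
    have h0 : IsHt 0 (fun _ => 0) :=
      ⟨fun _ _ => rfl, fun _ _ => rfl, fun x h h' => by push_cast at *; omega, fun _ => le_rfl⟩
    obtain ⟨P, hP⟩ := DyckPath.exists_of_isHt h0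
    refine ⟨⟨P, P, fun _ => le_rfl, ∅, by simp, by simp, ?_⟩, .nil _ _⟩
    ext c
    simp only [skewCells, biUnion_empty, notMem_empty, mem_filter, hP, false_iff]
    omega
  | succ n ih =>
    obtain ⟨T, hT⟩ := ih (p := fun i => p i.castSucc) fun i => hp i.castSucc
    have hlast := hp (Fin.last n)
    rw [Fin.val_last] at hlast
    obtain ⟨T', hT'⟩ := hG.exists_grow (s := (p (Fin.last n) : ℤ) - n)
      (hG.coverInclusive_of_growSeq (fun i => hp i.castSucc) hT) (by omega) (by omega)
    exact ⟨T', .cons n p T T' hT hT'⟩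

theorem growSeq_unique (hG : IsGrowth G) (h : GrowSeq G n p T) (h' : GrowSeq G n p U) : T = U := by
  induction h with
  | nil p T => exact DyckTiling.eq_of_order_zero _ _
  | cons n p T T' _ h ih =>
    cases h' with
    | cons _ _ V _ hV h' =>
      obtain rfl := ih hV
      exact hG.unique h h'

theorem lower_of_growSeq (hG : IsGrowth G) {P : DyckPath n} (C : ChordLabeling P)
    (h : GrowSeq G n (seqOf C) T) :
    T.lower = P := by
  induction n with
  | zero =>
    refine DyckPath.ht_injective fun x => ?_
    rcases le_total x 0 with hx | hx
    · rw [T.lower.isHt.left x (by simpa using hx), P.isHt.left x (by simpa using hx)]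
    · rw [T.lower.isHt.right x (by simpa using hx), P.isHt.right x (by simpa using hx)]
  | succ n ih =>
    obtain ⟨P', C', hP, hs, -⟩ := C.exists_remove_last
    cases h with
    | cons _ _ V _ hV h =>
      rw [show (fun i : Fin n => seqOf C i.castSucc) = seqOf C' from funext hs] at hV
      refine DyckPath.ht_injective fun x => ?_
      rw [hG.lower h, ih C' hV, hP, seqOf_last]

theorem exists_growSeq_of_coverInclusive (hG : IsGrowth G) (hT : T.CoverInclusive) :
    ∃ C : ChordLabeling T.lower, GrowSeq G n (seqOf C) T := by
  induction n with
  | zero =>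
    exact ⟨⟨Fin.elim0, Fin.elim0, fun i => i.elim0, fun i => i.elim0, fun i => i.elim0⟩, .nil _ _⟩
  | succ n ih =>
    obtain ⟨U, s, hU, hs, hs', h⟩ := hG.exists_shrink hT
    obtain ⟨C', hC'⟩ := ih hU
    have hps : (((s + n).toNat : ℕ) : ℤ) - n = s := by omega
    obtain ⟨C, hC, hlast⟩ := C'.exists_insert (p := (s + n).toNat) (P := T.lower) (by omega)
      (by rw [hps]; exact hG.lower h)
    refine ⟨C, .cons n _ U T ?_ ?_⟩
    · rwa [show (fun i : Fin n => seqOf C i.castSucc) = seqOf C' from funext hC]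
    · rwa [hlast, hps]

theorem growSeq_injective (hG : IsGrowth G) (hp : ∀ i, p i ≤ 2 * i) (hq : ∀ i, q i ≤ 2 * i)
    (h : GrowSeq G n p T) (h' : GrowSeq G n q T) : p = q := by
  induction h with
  | nil p T => exact Subsingleton.elim _ _
  | cons n p U T hU h ih =>
    cases h' with
    | cons _ _ V _ hV h' =>
      have hU' := hG.coverInclusive_of_growSeq (fun i => hp i.castSucc) hU
      have hV' := hG.coverInclusive_of_growSeq (fun i => hq i.castSucc) hV
      have hp1 := hp (Fin.last n)
      have hq1 := hq (Fin.last n)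
      rw [Fin.val_last] at hp1 hq1
      have s1 := hG.specialCol hU' (by omega) (by omega) h
      have s2 := hG.specialCol hV' (by omega) (by omega) h'
      have hs := le_antisymm (s2.2 _ s1.1) (s1.2 _ s2.1)
      have hlast : p (Fin.last n) = q (Fin.last n) := by omega
      rw [hlast] at h
      obtain rfl := hG.cancel hU' hV' (by omega) (by omega) h h'
      have hrest := ih (q := fun i => q i.castSucc) (fun i => hp i.castSucc)
        (fun i => hq i.castSucc) hV
      funext i
      induction i using Fin.lastCases with
      | last => exact hlast
      | cast i => exact congrFun hrest i

theorem existsUnique_growSeq (hG : IsGrowth G) {P : DyckPath n} {σ : Equiv.Perm (Fin n)}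
    (hσ : LinExt P σ) :
    ∃! T, ∃ C : ChordLabeling P, IsStandardization C.l σ ∧ GrowSeq G n (seqOf C) T := by
  obtain ⟨C, hC⟩ := hσ
  obtain ⟨T, hT⟩ := hG.exists_growSeq (seqOf_le C)
  refine ⟨T, ⟨C, hC, hT⟩, ?_⟩
  rintro U ⟨D, hD, hU⟩
  obtain rfl := ChordLabeling.eq_of_isStandardization hC hD
  exact hG.growSeq_unique hU hT

theorem existsUnique_linExt (hG : IsGrowth G) {P : DyckPath n} (hT : T.CoverInclusive)
    (hP : T.lower = P) :
    ∃! σ, ∃ C : ChordLabeling P, IsStandardization C.l σ ∧ GrowSeq G n (seqOf C) T := by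
  subst hP
  obtain ⟨C, hC⟩ := hG.exists_growSeq_of_coverInclusive hT
  obtain ⟨σ, hσ⟩ := exists_isStandardization C.inj
  refine ⟨σ, ⟨C, hσ, hC⟩, ?_⟩
  rintro τ ⟨D, hτ, hD⟩
  obtain rfl := ChordLabeling.eq_of_seqOf_eq
    (hG.growSeq_injective (seqOf_le C) (seqOf_le D) hC hD)
  exact hτ.unique hσ

end IsGrowth

/-- For each Dyck path `λ` of order `n`, the maps `σ ↦ DTS(λ,σ)` and
`σ ↦ DTR(λ,σ)` are bijections from linear extensions `𝓛(P_λ)` onto the cover-inclusive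
Dyck tilings whose lower path is `λ`. -/
theorem DTS_DTR_linear_extension_bijection (n : ℕ) (lam : DyckPath n) :
    (∀ σ : Equiv.Perm (Fin n), LinExt lam σ →
      (∃! T : DyckTiling n, IsDTSof lam σ T) ∧ (∃! T : DyckTiling n, IsDTRof lam σ T)) ∧
    (∀ (σ : Equiv.Perm (Fin n)) (T : DyckTiling n), LinExt lam σ →
      (IsDTSof lam σ T ∨ IsDTRof lam σ T) → T.CoverInclusive ∧ T.lower = lam) ∧
    (∀ T : DyckTiling n, T.CoverInclusive → T.lower = lam →
      (∃! σ : Equiv.Perm (Fin n), IsDTSof lam σ T) ∧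
      (∃! σ : Equiv.Perm (Fin n), IsDTRof lam σ T)) := by
  simp only [IsDTSof, IsDTRof, isDTS_iff_growSeq, isDTR_iff_growSeq]
  refine ⟨fun σ hσ => ⟨isGrowth_stripGrow.existsUnique_growSeq hσ,
    isGrowth_ribbonGrow.existsUnique_growSeq hσ⟩, ?_, fun T hT hP =>
    ⟨isGrowth_stripGrow.existsUnique_linExt hT hP, isGrowth_ribbonGrow.existsUnique_linExt hT hP⟩⟩
  rintro σ T - (⟨C, -, h⟩ | ⟨C, -, h⟩)
  · exact ⟨isGrowth_stripGrow.coverInclusive_of_growSeq (seqOf_le C) h,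
      isGrowth_stripGrow.lower_of_growSeq C h⟩
  · exact ⟨isGrowth_ribbonGrow.coverInclusive_of_growSeq (seqOf_le C) h,
      isGrowth_ribbonGrow.lower_of_growSeq C h⟩

end
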